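/- arXiv:1802.09754 — 6 statements merged into one kernel-verified Lean document; each statement's English description precedes it below -/
import Mathlib

section
/- Let F⁰ : ℝ³ → ℝ and F¹ : ℝ⁴ → ℝ be continuous, and let L : ℝ³ → ℝ be of class C² satisfying the Euler-type identity L_u(x,u,p) − L_px(x,u,p) − p·L_pu(x,u,p) − F⁰(x,u,p)·L_pp(x,u,p) = 0 for all (x,u,p) ∈ [0,1] × ℝ². Let T > 0 and let u : ℝ → ℝ → ℝ be such that u and its partial derivatives u_t, u_x, u_xx, u_tx exist, are continuous and bounded on (0,T) × [0,1], and u satisfies u_xx(t,x) = F⁰(x, u(t,x), u_x(t,x)) + F¹(x, u(t,x), u_x(t,x), u_t(t,x))·u_t(t,x) for all t ∈ (0,T), x ∈ [0,1], together with the boundary condition L_p(ι, u(t,ι), u_x(t,ι))·u_t(t,ι) = 0 for ι ∈ {0,1} and all t ∈ (0,T). Then for each t ∈ (0,T), the energy E(t) := ∫₀¹ L(x, u(t,x), u_x(t,x)) dx is differentiable in t with E′(t) = −∫₀¹ L_pp(x, u(t,x), u_x(t,x)) · F¹(x, u(t,x), u_x(t,x), u_t(t,x)) · u_t(t,x)²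 dx. -/
/-!
The energy is differentiated under the integral sign, giving
`E' = ∫ (L_u · u_t + L_p · u_tx)`. The second term is integrated by parts: since `u_t(t,·)` has
`x`-derivative `u_tx(t,·)`, the function `L_p(x,u,u_x) · u_t` has `x`-derivative
`(L_px + u_x · L_pu + u_xx · L_pp) · u_t + L_p · u_tx`, whose integral vanishes by the boundary
condition. Subtracting it, inserting the equation for `u_xx` and using the Euler identity leaves
`E' = -∫ L_pp · F¹ · u_t²`.

The hypotheses give `u_tx` as the time derivative of `u_x`; that it is also the space derivative
of `u_t` (`hasDerivWithinAt_mixed`) follows by differentiating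
`u(t,x) = u(t,0) + ∫₀ˣ u_x(t,y) dy` in `t`.
-/

open Set

/-- Differentiation under the integral sign; the domination comes from compactness of
`[t - ε, t + ε] × [0, 1]`. -/
theorem hasDerivAt_integral_param {T : ℝ} {f f' : ℝ → ℝ → ℝ}
    (hf : ∀ t ∈ Ioo (0:ℝ) T, ∀ x ∈ Icc (0:ℝ) 1, HasDerivAt (fun s => f s x) (f' t x) t)
    (hfc : ∀ t ∈ Ioo (0:ℝ) T, ContinuousOn (f t) (Icc (0:ℝ) 1))
    (hfc' : ContinuousOn (fun q : ℝ × ℝ => f' q.1 q.2) (Ioo (0:ℝ) T ×ˢ Icc (0:ℝ) 1))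
    {t : ℝ} (ht : t ∈ Ioo (0:ℝ) T) {b : ℝ} (hb : b ∈ Icc (0:ℝ) 1) :
    HasDerivAt (fun s => ∫ x in (0:ℝ)..b, f s x) (∫ x in (0:ℝ)..b, f' t x) t := by
  obtain ⟨ε, hε, hball⟩ := Metric.nhds_basis_closedBall.mem_iff.1 (Ioo_mem_nhds ht.1 ht.2)
  have hcpt : IsCompact (Metric.closedBall t ε ×ˢ Icc (0:ℝ) 1) :=
    (isCompact_closedBall t ε).prod isCompact_Icc
  obtain ⟨C, hC⟩ := hcpt.exists_bound_of_continuousOn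
    (hfc'.mono (prod_mono hball Subset.rfl))
  have hsub : uIcc (0:ℝ) b ⊆ Icc 0 1 := by
    rw [uIcc_of_le hb.1]; exact Icc_subset_Icc_right hb.2
  have hsub' : uIoc (0:ℝ) b ⊆ Icc 0 1 := uIoc_subset_uIcc.trans hsub
  have hint : ∀ s ∈ Ioo (0:ℝ) T, IntervalIntegrable (f s) MeasureTheory.volume 0 b :=
    fun s hs => ((hfc s hs).mono hsub).intervalIntegrable
  have hint' : IntervalIntegrable (f' t) MeasureTheory.volume 0 b := by
    refine ContinuousOn.intervalIntegrable (ContinuousOn.mono ?_ hsub)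
    exact hfc'.comp (f := fun x => (t, x)) (by fun_prop) (fun x hx => ⟨ht, hx⟩)
  refine (intervalIntegral.hasDerivAt_integral_of_dominated_loc_of_deriv_le
    (F := f) (F' := f') (bound := fun _ => C) (Metric.closedBall_mem_nhds t hε)
    ?_ (hint t ht) ?_ ?_ ?_ ?_).2
  · filter_upwards [Ioo_mem_nhds ht.1 ht.2] with s hs
    exact (hint s hs).def'.aestronglyMeasurable
  · exact hint'.def'.aestronglyMeasurable
  · exact Filter.Eventually.of_forall fun x hx s hs => hC (s, x) ⟨hs, hsub' hx⟩
  · exact intervalIntegrable_const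
  · exact Filter.Eventually.of_forall fun x hx s hs => hf s (hball hs) x (hsub' hx)

/-- Equality of mixed partial derivatives, without any assumed `x`-differentiability
of `u_t`. -/
theorem hasDerivWithinAt_mixed {T : ℝ} {u ut ux utx : ℝ → ℝ → ℝ}
    (hut : ∀ t ∈ Ioo (0:ℝ) T, ∀ x ∈ Icc (0:ℝ) 1, HasDerivAt (fun s => u s x) (ut t x) t)
    (hux : ∀ t ∈ Ioo (0:ℝ) T, ∀ x ∈ Icc (0:ℝ) 1,
      HasDerivWithinAt (fun y => u t y) (ux t x) (Icc (0:ℝ) 1) x)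
    (hutx : ∀ t ∈ Ioo (0:ℝ) T, ∀ x ∈ Icc (0:ℝ) 1, HasDerivAt (fun s => ux s x) (utx t x) t)
    (huxc : ∀ t ∈ Ioo (0:ℝ) T, ContinuousOn (ux t) (Icc (0:ℝ) 1))
    (hutxcont : ContinuousOn (fun q : ℝ × ℝ => utx q.1 q.2) (Ioo (0:ℝ) T ×ˢ Icc (0:ℝ) 1))
    {t : ℝ} (ht : t ∈ Ioo (0:ℝ) T) {x : ℝ} (hx : x ∈ Icc (0:ℝ) 1) :
    HasDerivWithinAt (fun y => ut t y) (utx t x) (Icc (0:ℝ) 1) x := by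
  have h0 : (0:ℝ) ∈ Icc (0:ℝ) 1 := by simp
  have hftc : ∀ s ∈ Ioo (0:ℝ) T, ∀ y ∈ Icc (0:ℝ) 1,
      ∫ z in (0:ℝ)..y, ux s z = u s y - u s 0 := by
    intro s hs y hy
    have hsub : Icc (0:ℝ) y ⊆ Icc 0 1 := Icc_subset_Icc_right hy.2
    refine intervalIntegral.integral_eq_sub_of_hasDerivAt_of_le hy.1
      (fun z hz => ((hux s hs z (hsub hz)).continuousWithinAt).mono hsub) (fun z hz => ?_)
      (((huxc s hs).mono (by rwa [uIcc_of_le hy.1])).intervalIntegrable)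
    exact (hux s hs z (hsub (Ioo_subset_Icc_self hz))).hasDerivAt
      (Icc_mem_nhds hz.1 (hz.2.trans_le hy.2))
  have hrep : ∀ y ∈ Icc (0:ℝ) 1, ut t y = ut t 0 + ∫ z in (0:ℝ)..y, utx t z := by
    intro y hy
    have h1 := hasDerivAt_integral_param hutx huxc hutxcont ht hy
    have h2 : HasDerivAt (fun s => ∫ z in (0:ℝ)..y, ux s z) (ut t y - ut t 0) t := by
      refine ((hut t ht y hy).sub (hut t ht 0 h0)).congr_of_eventuallyEq ?_
      filter_upwards [Ioo_mem_nhds ht.1 ht.2] with s hs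
      exact hftc s hs y hy
    rw [h1.unique h2]; ring
  have hc : ContinuousOn (utx t) (Icc (0:ℝ) 1) :=
    hutxcont.comp (f := fun x => (t, x)) (by fun_prop) (fun x hx => ⟨ht, hx⟩)
  have hd : HasDerivWithinAt (fun y => ∫ z in (0:ℝ)..y, utx t z) (utx t x) (Icc (0:ℝ) 1) x := by
    have : Fact (x ∈ Icc (0:ℝ) 1) := ⟨hx⟩
    refine intervalIntegral.integral_hasDerivWithinAt_right ?_
      (hc.stronglyMeasurableAtFilter_nhdsWithin measurableSet_Icc x) (hc x hx)
    refine (hc.mono ?_).intervalIntegrable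
    rw [uIcc_of_le hx.1]; exact Icc_subset_Icc_right hx.2
  exact (hd.const_add (ut t 0)).congr hrep (hrep x hx)

/-- Chain rule along a curve `(a, b, c)`. With constant components it also identifies the
partial derivatives of `G` with the components of its total derivative. -/
theorem hasDerivWithinAt_comp₃ {G : ℝ → ℝ → ℝ → ℝ} (hG : Differentiable ℝ ↿G)
    {a b c : ℝ → ℝ} {a' b' c' r : ℝ} {s : Set ℝ}
    (ha : HasDerivWithinAt a a' s r) (hb : HasDerivWithinAt b b' s r)
    (hc : HasDerivWithinAt c c' s r) :
    HasDerivWithinAt (fun r => G (a r) (b r) (c r))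
      (a' * fderiv ℝ ↿G (a r, b r, c r) (1, 0, 0) + b' * fderiv ℝ ↿G (a r, b r, c r) (0, 1, 0)
        + c' * fderiv ℝ ↿G (a r, b r, c r) (0, 0, 1)) s r := by
  have h := (hG (a r, b r, c r)).hasFDerivAt.comp_hasDerivWithinAt
    (f := fun r => (a r, b r, c r)) r (ha.prodMk (hb.prodMk hc))
  have e : (a', b', c') = a' • ((1, 0, 0) : ℝ × ℝ × ℝ) + b' • ((0, 1, 0) : ℝ × ℝ × ℝ)
      + c' • ((0, 0, 1) : ℝ × ℝ × ℝ) := by simp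
  rw [e] at h
  simp only [map_add, map_smul, smul_eq_mul] at h
  exact h

/-- Energy decay identity. Let `F⁰ : ℝ³ → ℝ`, `F¹ : ℝ⁴ → ℝ` be continuous
and `L : ℝ³ → ℝ` be `C²` satisfying the Euler identity
`L_u - L_px - p·L_pu - F⁰·L_pp = 0` on `[0,1] × ℝ²`. If `u` is a classical solution of
`u_xx = F⁰(x,u,u_x) + F¹(x,u,u_x,u_t)·u_t` on `(0,T) × [0,1]` (with `u, u_t, u_x, u_xx,
u_tx` continuous and bounded) satisfying the boundary condition
`L_p(ι,u,u_x)·u_t = 0` at `ι ∈ {0,1}`, then for each `t ∈ (0,T)` the energy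
`E(t) = ∫₀¹ L(x,u,u_x) dx` is differentiable with
`E′(t) = -∫₀¹ L_pp·F¹·u_t² dx`. -/
theorem energy_decay_identity
    (F0 : ℝ → ℝ → ℝ → ℝ) (F1 : ℝ → ℝ → ℝ → ℝ → ℝ)
    (hF0c : Continuous ↿F0) (hF1c : Continuous ↿F1)
    (L Lu Lp Lpx Lpu Lpp : ℝ → ℝ → ℝ → ℝ)
    (hLC2 : ContDiff ℝ 2 ↿L)
    (hLu : ∀ x v p : ℝ, HasDerivAt (fun v' => L x v' p) (Lu x v p) v)
    (hLp : ∀ x v p : ℝ, HasDerivAt (fun p' => L x v p') (Lp x v p) p)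
    (hLpx : ∀ x v p : ℝ, HasDerivAt (fun x' => Lp x' v p) (Lpx x v p) x)
    (hLpu : ∀ x v p : ℝ, HasDerivAt (fun v' => Lp x v' p) (Lpu x v p) v)
    (hLpp : ∀ x v p : ℝ, HasDerivAt (fun p' => Lp x v p') (Lpp x v p) p)
    (hEuler : ∀ x ∈ Icc (0:ℝ) 1, ∀ v p : ℝ,
      Lu x v p - Lpx x v p - p * Lpu x v p - F0 x v p * Lpp x v p = 0)
    (T : ℝ) (hT : 0 < T)
    (u ut ux uxx utx : ℝ → ℝ → ℝ)
    (hut : ∀ t ∈ Ioo (0:ℝ) T, ∀ x ∈ Icc (0:ℝ) 1,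
      HasDerivAt (fun s => u s x) (ut t x) t)
    (hux : ∀ t ∈ Ioo (0:ℝ) T, ∀ x ∈ Icc (0:ℝ) 1,
      HasDerivWithinAt (fun y => u t y) (ux t x) (Icc (0:ℝ) 1) x)
    (huxx : ∀ t ∈ Ioo (0:ℝ) T, ∀ x ∈ Icc (0:ℝ) 1,
      HasDerivWithinAt (fun y => ux t y) (uxx t x) (Icc (0:ℝ) 1) x)
    (hutx : ∀ t ∈ Ioo (0:ℝ) T, ∀ x ∈ Icc (0:ℝ) 1,
      HasDerivAt (fun s => ux s x) (utx t x) t)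
    (hucont : ContinuousOn (fun q : ℝ × ℝ => u q.1 q.2) (Ioo (0:ℝ) T ×ˢ Icc (0:ℝ) 1))
    (hutcont : ContinuousOn (fun q : ℝ × ℝ => ut q.1 q.2) (Ioo (0:ℝ) T ×ˢ Icc (0:ℝ) 1))
    (huxcont : ContinuousOn (fun q : ℝ × ℝ => ux q.1 q.2) (Ioo (0:ℝ) T ×ˢ Icc (0:ℝ) 1))
    (huxxcont : ContinuousOn (fun q : ℝ × ℝ => uxx q.1 q.2) (Ioo (0:ℝ) T ×ˢ Icc (0:ℝ) 1))
    (hutxcont : ContinuousOn (fun q : ℝ × ℝ => utx q.1 q.2) (Ioo (0:ℝ) T ×ˢ Icc (0:ℝ) 1))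
    (hbdd : ∃ C : ℝ, ∀ t ∈ Ioo (0:ℝ) T, ∀ x ∈ Icc (0:ℝ) 1,
      |u t x| ≤ C ∧ |ut t x| ≤ C ∧ |ux t x| ≤ C ∧ |uxx t x| ≤ C ∧ |utx t x| ≤ C)
    (hPDE : ∀ t ∈ Ioo (0:ℝ) T, ∀ x ∈ Icc (0:ℝ) 1,
      uxx t x = F0 x (u t x) (ux t x)
        + F1 x (u t x) (ux t x) (ut t x) * ut t x)
    (hBC : ∀ t ∈ Ioo (0:ℝ) T,
      Lp 0 (u t 0) (ux t 0) * ut t 0 = 0 ∧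
      Lp 1 (u t 1) (ux t 1) * ut t 1 = 0) :
    ∀ t ∈ Ioo (0:ℝ) T,
      HasDerivAt (fun s => ∫ x in (0:ℝ)..1, L x (u s x) (ux s x))
        (-(∫ x in (0:ℝ)..1,
            Lpp x (u t x) (ux t x) * F1 x (u t x) (ux t x) (ut t x)
              * (ut t x) ^ 2)) t := by
  intro t ht
  have hLd : Differentiable ℝ ↿L := hLC2.differentiable (by norm_num)
  -- The given partial derivatives are the components of the total derivatives of `L` and `L_p`,
  -- which makes `L_p` of class `C¹` and all of them jointly continuous.
  have eLu : ∀ x v p, Lu x v p = fderiv ℝ ↿L (x, v, p) (0, 1, 0) := by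
    intro x v p
    have h := hasDerivWithinAt_comp₃ hLd (hasDerivWithinAt_const v univ x)
      (hasDerivWithinAt_id v univ) (hasDerivWithinAt_const v univ p)
    simpa using (hLu x v p).unique (hasDerivWithinAt_univ.1 h)
  have eLp : ∀ x v p, Lp x v p = fderiv ℝ ↿L (x, v, p) (0, 0, 1) := by
    intro x v p
    have h := hasDerivWithinAt_comp₃ hLd (hasDerivWithinAt_const p univ x)
      (hasDerivWithinAt_const p univ v) (hasDerivWithinAt_id p univ)
    simpa using (hLp x v p).unique (hasDerivWithinAt_univ.1 h)
  have hfd : ContDiff ℝ 1 (fderiv ℝ ↿L) := hLC2.fderiv_right (by norm_num)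
  have hLpC : ContDiff ℝ 1 ↿Lp := by
    have : (↿Lp : ℝ × ℝ × ℝ → ℝ) = fun q => fderiv ℝ ↿L q (0, 0, 1) :=
      funext fun q => eLp q.1 q.2.1 q.2.2
    rw [this]
    exact hfd.clm_apply contDiff_const
  have hLpd : Differentiable ℝ ↿Lp := hLpC.differentiable (by norm_num)
  have eLpx : ∀ x v p, Lpx x v p = fderiv ℝ ↿Lp (x, v, p) (1, 0, 0) := by
    intro x v p
    have h := hasDerivWithinAt_comp₃ hLpd (hasDerivWithinAt_id x univ)
      (hasDerivWithinAt_const x univ v) (hasDerivWithinAt_const x univ p)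
    simpa using (hLpx x v p).unique (hasDerivWithinAt_univ.1 h)
  have eLpu : ∀ x v p, Lpu x v p = fderiv ℝ ↿Lp (x, v, p) (0, 1, 0) := by
    intro x v p
    have h := hasDerivWithinAt_comp₃ hLpd (hasDerivWithinAt_const v univ x)
      (hasDerivWithinAt_id v univ) (hasDerivWithinAt_const v univ p)
    simpa using (hLpu x v p).unique (hasDerivWithinAt_univ.1 h)
  have eLpp : ∀ x v p, Lpp x v p = fderiv ℝ ↿Lp (x, v, p) (0, 0, 1) := by
    intro x v p
    have h := hasDerivWithinAt_comp₃ hLpd (hasDerivWithinAt_const p univ x)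
      (hasDerivWithinAt_const p univ v) (hasDerivWithinAt_id p univ)
    simpa using (hLpp x v p).unique (hasDerivWithinAt_univ.1 h)
  have cfd : Continuous (fderiv ℝ ↿L) := hfd.continuous
  have cfdp : Continuous (fderiv ℝ ↿Lp) := hLpC.continuous_fderiv (by norm_num)
  have slice : ∀ {w : ℝ → ℝ → ℝ},
      ContinuousOn (fun q : ℝ × ℝ => w q.1 q.2) (Ioo (0:ℝ) T ×ˢ Icc (0:ℝ) 1) →
      ∀ s ∈ Ioo (0:ℝ) T, ContinuousOn (w s) (Icc (0:ℝ) 1) := fun hw s hs =>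
    hw.comp (f := fun x => (s, x)) (by fun_prop) (fun x hx => ⟨hs, hx⟩)
  have hmix : ∀ x ∈ Icc (0:ℝ) 1,
      HasDerivWithinAt (fun y => ut t y) (utx t x) (Icc (0:ℝ) 1) x := fun x hx =>
    hasDerivWithinAt_mixed hut hux hutx (slice huxcont) hutxcont ht hx
  have hE : HasDerivAt (fun s => ∫ x in (0:ℝ)..1, L x (u s x) (ux s x))
      (∫ x in (0:ℝ)..1, (Lu x (u t x) (ux t x) * ut t x + Lp x (u t x) (ux t x) * utx t x)) t := by
    refine hasDerivAt_integral_param (T := T) (f := fun s x => L x (u s x) (ux s x))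
      (f' := fun t x => Lu x (u t x) (ux t x) * ut t x + Lp x (u t x) (ux t x) * utx t x)
      ?_ ?_ ?_ ht (by simp)
    · intro s hs x hx
      have h := hasDerivWithinAt_comp₃ hLd (hasDerivWithinAt_const s univ x)
        (hut s hs x hx).hasDerivWithinAt (hutx s hs x hx).hasDerivWithinAt
      refine (hasDerivWithinAt_univ.1 h).congr_deriv ?_
      rw [eLu, eLp]; ring
    · intro s hs
      exact hLd.continuous.comp_continuousOn
        (continuousOn_id.prodMk ((slice hucont s hs).prodMk (slice huxcont s hs)))
    · simp only [eLu, eLp]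
      have hq : ContinuousOn (fun q : ℝ × ℝ => fderiv ℝ ↿L (q.2, u q.1 q.2, ux q.1 q.2))
          (Ioo (0:ℝ) T ×ˢ Icc (0:ℝ) 1) :=
        cfd.comp_continuousOn (continuousOn_snd.prodMk (hucont.prodMk huxcont))
      exact ((hq.clm_apply continuousOn_const).mul hutcont).add
        ((hq.clm_apply continuousOn_const).mul hutxcont)
  have cu := slice hucont t ht
  have cux := slice huxcont t ht
  have cut := slice hutcont t ht
  have cuxx := slice huxxcont t ht
  have cutx := slice hutxcont t ht
  have ctr : ContinuousOn (fun x => (x, u t x, ux t x)) (Icc (0:ℝ) 1) :=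
    continuousOn_id.prodMk (cu.prodMk cux)
  have cL : ∀ e : ℝ × ℝ × ℝ,
      ContinuousOn (fun x => fderiv ℝ ↿L (x, u t x, ux t x) e) (Icc (0:ℝ) 1) := fun e =>
    (cfd.comp_continuousOn ctr).clm_apply continuousOn_const
  have cLp : ∀ e : ℝ × ℝ × ℝ,
      ContinuousOn (fun x => fderiv ℝ ↿Lp (x, u t x, ux t x) e) (Icc (0:ℝ) 1) := fun e =>
    (cfdp.comp_continuousOn ctr).clm_apply continuousOn_const
  -- The `x`-derivative of `L_p(x,u,u_x) · u_t`.
  let g : ℝ → ℝ := fun x =>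
    (Lpx x (u t x) (ux t x) + ux t x * Lpu x (u t x) (ux t x)
      + uxx t x * Lpp x (u t x) (ux t x)) * ut t x + Lp x (u t x) (ux t x) * utx t x
  have hg : ∀ x ∈ Icc (0:ℝ) 1, HasDerivWithinAt (fun x => Lp x (u t x) (ux t x) * ut t x) (g x)
      (Icc (0:ℝ) 1) x := by
    intro x hx
    have h := (hasDerivWithinAt_comp₃ hLpd (hasDerivWithinAt_id x (Icc (0:ℝ) 1))
      (hux t ht x hx) (huxx t ht x hx)).mul (hmix x hx)
    refine h.congr_deriv ?_
    simp only [g, eLpx, eLpu, eLpp, id]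
    ring
  have cg : ContinuousOn g (Icc (0:ℝ) 1) := by
    simp only [g, eLpx, eLpu, eLpp, eLp]
    exact ((((cLp _).add (cux.mul (cLp _))).add (cuxx.mul (cLp _))).mul cut).add
      ((cL _).mul cutx)
  have h01 : uIcc (0:ℝ) 1 = Icc 0 1 := uIcc_of_le zero_le_one
  have ig : IntervalIntegrable g MeasureTheory.volume 0 1 :=
    ContinuousOn.intervalIntegrable (by rwa [h01])
  have hg0 : ∫ x in (0:ℝ)..1, g x = 0 := by
    rw [intervalIntegral.integral_eq_sub_of_hasDerivAt_of_le zero_le_one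
      (fun x hx => (hg x hx).continuousWithinAt)
      (fun x hx => (hg x (Ioo_subset_Icc_self hx)).hasDerivAt (Icc_mem_nhds hx.1 hx.2)) ig,
      (hBC t ht).1, (hBC t ht).2, sub_zero]
  refine hE.congr_deriv ?_
  have iE : IntervalIntegrable
      (fun x => Lu x (u t x) (ux t x) * ut t x + Lp x (u t x) (ux t x) * utx t x)
      MeasureTheory.volume 0 1 := by
    refine ContinuousOn.intervalIntegrable ?_
    rw [h01]
    simp only [eLu, eLp]
    exact ((cL _).mul cut).add ((cL _).mul cutx)
  have hsub := intervalIntegral.integral_sub iE ig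
  rw [hg0, sub_zero] at hsub
  rw [← hsub, ← intervalIntegral.integral_neg]
  refine intervalIntegral.integral_congr fun x hx => ?_
  rw [h01] at hx
  simp only [g]
  rw [hPDE t ht x hx]
  linear_combination ut t x * hEuler x hx (u t x) (ux t x)
end

section
/- Let F⁰ : ℝ³ → ℝ have a partial derivative F⁰_p with respect to its third variable, and let L : ℝ³ → ℝ be of class C³ on [0,1] × ℝ². Suppose that the p-differentiated identity L_ppx(x,u,p) + p·L_ppu(x,u,p) + F⁰(x,u,p)·L_ppp(x,u,p) + F⁰_p(x,u,p)·L_pp(x,u,p) = 0 holds for all (x,u,p) ∈ [0,1] × ℝ², and that L_u(x,u,0) − L_px(x,u,0) − F⁰(x,u,0)·L_pp(x,u,0) = 0 holds for all (x,u) ∈ [0,1] × ℝ. Then L_u(x,u,p) − L_px(x,u,p) − p·L_pu(x,u,p) − F⁰(x,u,p)·L_pp(x,u,p) = 0 for all (x,u,p) ∈ [0,1] × ℝ². -/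
open Set

/-!
Fix `x` and `u`. The left-hand side of the Euler identity is a differentiable function of `p`, and
its `p`-derivative is `-(L_ppx + p·L_ppu + F⁰·L_ppp + F⁰_p·L_pp) = 0`: the term `∂_p L_u = L_pu`
cancels the `L_pu` coming from the product rule for `p·L_pu`. Hence it is constant in `p`, equal to
its value `0` at `p = 0`.

The only analytic input is that mixed partial derivatives commute up to the boundary of the slab
`[0,1] × ℝ²`. Partial derivatives are expressed as `fderivWithin` on the slab applied to a fixed
vector (`slabDeriv`); they commute for `C²` functions (`slabDeriv_comm`), because the slab is the
closure of its interior.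
-/

/-- The closed slab `[0,1] × ℝ²`. -/
abbrev slab : Set (ℝ × ℝ × ℝ) := Icc (0:ℝ) 1 ×ˢ (univ : Set (ℝ × ℝ))

/-- The derivative of `g` in the direction `a`, relative to the slab (one-sided in `x` on the
faces `x = 0` and `x = 1`). -/
noncomputable def slabDeriv (a : ℝ × ℝ × ℝ) (g : ℝ × ℝ × ℝ → ℝ) (z : ℝ × ℝ × ℝ) : ℝ :=
  fderivWithin ℝ g slab z a

lemma uniqueDiffOn_slab : UniqueDiffOn ℝ slab :=
  (uniqueDiffOn_Icc zero_lt_one).prod uniqueDiffOn_univ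

lemma slab_subset_closure_interior : slab ⊆ closure (interior slab) := by
  intro z hz
  rw [interior_prod_eq, interior_univ, interior_Icc, closure_prod_eq, closure_univ,
    closure_Ioo zero_ne_one]
  exact hz

lemma contDiffOn_slabDeriv {a : ℝ × ℝ × ℝ} {g : ℝ × ℝ × ℝ → ℝ} {m n : WithTop ℕ∞}
    (hg : ContDiffOn ℝ n g slab) (hmn : m + 1 ≤ n) : ContDiffOn ℝ m (slabDeriv a g) slab :=
  (hg.fderivWithin uniqueDiffOn_slab hmn).clm_apply contDiffOn_const

lemma slabDeriv_slabDeriv {a b : ℝ × ℝ × ℝ} {g : ℝ × ℝ × ℝ → ℝ} (hg : ContDiffOn ℝ 2 g slab)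
    {z : ℝ × ℝ × ℝ} (hz : z ∈ slab) :
    slabDeriv a (slabDeriv b g) z = fderivWithin ℝ (fderivWithin ℝ g slab) slab z a b := by
  have hd : DifferentiableWithinAt ℝ (fderivWithin ℝ g slab) slab z :=
    (hg.fderivWithin uniqueDiffOn_slab (m := 1) (by norm_num)).differentiableOn one_ne_zero z hz
  have h := (hd.hasFDerivWithinAt.clm_apply (hasFDerivWithinAt_const b z slab)).fderivWithin
    (uniqueDiffOn_slab z hz)
  change fderivWithin ℝ (fun y => fderivWithin ℝ g slab y b) slab z a = _
  rw [h]
  simp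

lemma slabDeriv_comm {a b : ℝ × ℝ × ℝ} {g : ℝ × ℝ × ℝ → ℝ} (hg : ContDiffOn ℝ 2 g slab) :
    EqOn (slabDeriv a (slabDeriv b g)) (slabDeriv b (slabDeriv a g)) slab := fun z hz => by
  rw [slabDeriv_slabDeriv hg hz, slabDeriv_slabDeriv hg hz]
  exact (hg z hz).isSymmSndFDerivWithinAt (by simp) uniqueDiffOn_slab
    (slab_subset_closure_interior hz) hz a b

lemma hasDerivWithinAt_x {g : ℝ × ℝ × ℝ → ℝ} (hg : DifferentiableOn ℝ g slab)
    {x : ℝ} (hx : x ∈ Icc (0:ℝ) 1) (u p : ℝ) :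
    HasDerivWithinAt (fun y => g (y, u, p)) (slabDeriv (1, 0, 0) g (x, u, p)) (Icc 0 1) x :=
  (hg (x, u, p) ⟨hx, mem_univ _⟩).hasFDerivWithinAt.comp_hasDerivWithinAt x
    ((hasDerivWithinAt_id x _).prodMk (hasDerivWithinAt_const x _ (u, p)))
    (t := slab) (fun _ hy => ⟨hy, mem_univ _⟩)

lemma hasDerivAt_u {g : ℝ × ℝ × ℝ → ℝ} (hg : DifferentiableOn ℝ g slab)
    {x : ℝ} (hx : x ∈ Icc (0:ℝ) 1) (u p : ℝ) :
    HasDerivAt (fun v => g (x, v, p)) (slabDeriv (0, 1, 0) g (x, u, p)) u :=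
  hasDerivWithinAt_univ.1 <|
    (hg (x, u, p) ⟨hx, mem_univ _⟩).hasFDerivWithinAt.comp_hasDerivWithinAt u
      ((hasDerivWithinAt_const u _ x).prodMk
        ((hasDerivWithinAt_id u _).prodMk (hasDerivWithinAt_const u _ p)))
      (t := slab) (fun _ _ => ⟨hx, mem_univ _⟩)

lemma hasDerivAt_p {g : ℝ × ℝ × ℝ → ℝ} (hg : DifferentiableOn ℝ g slab)
    {x : ℝ} (hx : x ∈ Icc (0:ℝ) 1) (u p : ℝ) :
    HasDerivAt (fun w => g (x, u, w)) (slabDeriv (0, 0, 1) g (x, u, p)) p :=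
  hasDerivWithinAt_univ.1 <|
    (hg (x, u, p) ⟨hx, mem_univ _⟩).hasFDerivWithinAt.comp_hasDerivWithinAt p
      ((hasDerivWithinAt_const p _ x).prodMk
        ((hasDerivWithinAt_const p _ u).prodMk (hasDerivWithinAt_id p _)))
      (t := slab) (fun _ _ => ⟨hx, mem_univ _⟩)

/-- A function given as the `x`-partial of `G` on the slab is `slabDeriv (1, 0, 0)` of any
differentiable `g` agreeing with `G` there. -/
lemma eqOn_slabDeriv_x {g : ℝ × ℝ × ℝ → ℝ} (hg : DifferentiableOn ℝ g slab)
    {G Gx : ℝ → ℝ → ℝ → ℝ} (hG : EqOn ↿G g slab)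
    (h : ∀ x ∈ Icc (0:ℝ) 1, ∀ u p : ℝ,
      HasDerivWithinAt (fun y => G y u p) (Gx x u p) (Icc (0:ℝ) 1) x) :
    EqOn ↿Gx (slabDeriv (1, 0, 0) g) slab := by
  rintro ⟨x, u, p⟩ ⟨hx, -⟩
  have h' := (hasDerivWithinAt_x hg hx u p).congr_of_mem
    (f₁ := fun y => G y u p) (fun y hy => hG (x := (y, u, p)) ⟨hy, mem_univ _⟩) hx
  exact (uniqueDiffOn_Icc zero_lt_one x hx).eq_deriv _ (h x hx u p) h'

lemma eqOn_slabDeriv_u {g : ℝ × ℝ × ℝ → ℝ} (hg : DifferentiableOn ℝ g slab)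
    {G Gu : ℝ → ℝ → ℝ → ℝ} (hG : EqOn ↿G g slab)
    (h : ∀ x ∈ Icc (0:ℝ) 1, ∀ u p : ℝ, HasDerivAt (fun v => G x v p) (Gu x u p) u) :
    EqOn ↿Gu (slabDeriv (0, 1, 0) g) slab := by
  rintro ⟨x, u, p⟩ ⟨hx, -⟩
  have hfun : (fun v => G x v p) = fun v => g (x, v, p) :=
    funext fun v => hG (x := (x, v, p)) ⟨hx, mem_univ _⟩
  exact (h x hx u p).unique (hfun ▸ hasDerivAt_u hg hx u p)

lemma eqOn_slabDeriv_p {g : ℝ × ℝ × ℝ → ℝ} (hg : DifferentiableOn ℝ g slab)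
    {G Gp : ℝ → ℝ → ℝ → ℝ} (hG : EqOn ↿G g slab)
    (h : ∀ x ∈ Icc (0:ℝ) 1, ∀ u p : ℝ, HasDerivAt (fun w => G x u w) (Gp x u p) p) :
    EqOn ↿Gp (slabDeriv (0, 0, 1) g) slab := by
  rintro ⟨x, u, p⟩ ⟨hx, -⟩
  have hfun : (fun w => G x u w) = fun w => g (x, u, w) :=
    funext fun w => hG (x := (x, u, w)) ⟨hx, mem_univ _⟩
  exact (h x hx u p).unique (hfun ▸ hasDerivAt_p hg hx u p)

/-- If `Ga = ∂ₐ g` and `Gpa = ∂ₐ ∂_p g` on the slab with `g` of class `C²`, then `∂_p Ga = Gpa`. -/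
lemma hasDerivAt_p_of_mixed {a : ℝ × ℝ × ℝ} {g : ℝ × ℝ × ℝ → ℝ} (hg : ContDiffOn ℝ 2 g slab)
    {Ga Gpa : ℝ → ℝ → ℝ → ℝ} (hGa : EqOn ↿Ga (slabDeriv a g) slab)
    (hGpa : EqOn ↿Gpa (slabDeriv a (slabDeriv (0, 0, 1) g)) slab)
    {x : ℝ} (hx : x ∈ Icc (0:ℝ) 1) (u p : ℝ) :
    HasDerivAt (fun w => Ga x u w) (Gpa x u p) p := by
  have hfun : (fun w => Ga x u w) = fun w => slabDeriv a g (x, u, w) :=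
    funext fun w => hGa (x := (x, u, w)) ⟨hx, mem_univ _⟩
  have hz : (x, u, p) ∈ slab := ⟨hx, mem_univ _⟩
  have hval : Gpa x u p = slabDeriv (0, 0, 1) (slabDeriv a g) (x, u, p) :=
    (hGpa hz).trans (slabDeriv_comm hg hz)
  rw [hfun, hval]
  exact hasDerivAt_p ((contDiffOn_slabDeriv (m := 1) hg (by norm_num)).differentiableOn
    one_ne_zero) hx u p

/-- Let `L : ℝ³ → ℝ` be `C³` on `[0,1] × ℝ²`. If the `p`-differentiated
identity `L_ppx + p·L_ppu + F⁰·L_ppp + F⁰_p·L_pp = 0` holds on `[0,1] × ℝ²` and the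
Euler identity `L_u - L_px - F⁰·L_pp = 0` holds at `p = 0`, then the full Euler identity
`L_u - L_px - p·L_pu - F⁰·L_pp = 0` holds on all of `[0,1] × ℝ²`. -/
theorem euler_identity_from_p_derivative
    (F0 F0p : ℝ → ℝ → ℝ → ℝ)
    (hF0p : ∀ x u p : ℝ, HasDerivAt (fun w => F0 x u w) (F0p x u p) p)
    (L Lu Lp Lpx Lpu Lpp Lppx Lppu Lppp : ℝ → ℝ → ℝ → ℝ)
    (hC3 : ContDiffOn ℝ 3 ↿L (Icc (0:ℝ) 1 ×ˢ (univ : Set (ℝ × ℝ))))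
    (hLu : ∀ x ∈ Icc (0:ℝ) 1, ∀ u p : ℝ,
      HasDerivAt (fun v => L x v p) (Lu x u p) u)
    (hLp : ∀ x ∈ Icc (0:ℝ) 1, ∀ u p : ℝ,
      HasDerivAt (fun w => L x u w) (Lp x u p) p)
    (hLpx : ∀ x ∈ Icc (0:ℝ) 1, ∀ u p : ℝ,
      HasDerivWithinAt (fun y => Lp y u p) (Lpx x u p) (Icc (0:ℝ) 1) x)
    (hLpu : ∀ x ∈ Icc (0:ℝ) 1, ∀ u p : ℝ,
      HasDerivAt (fun v => Lp x v p) (Lpu x u p) u)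
    (hLpp : ∀ x ∈ Icc (0:ℝ) 1, ∀ u p : ℝ,
      HasDerivAt (fun w => Lp x u w) (Lpp x u p) p)
    (hLppx : ∀ x ∈ Icc (0:ℝ) 1, ∀ u p : ℝ,
      HasDerivWithinAt (fun y => Lpp y u p) (Lppx x u p) (Icc (0:ℝ) 1) x)
    (hLppu : ∀ x ∈ Icc (0:ℝ) 1, ∀ u p : ℝ,
      HasDerivAt (fun v => Lpp x v p) (Lppu x u p) u)
    (hLppp : ∀ x ∈ Icc (0:ℝ) 1, ∀ u p : ℝ,
      HasDerivAt (fun w => Lpp x u w) (Lppp x u p) p)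
    (hdiff : ∀ x ∈ Icc (0:ℝ) 1, ∀ u p : ℝ,
      Lppx x u p + p * Lppu x u p + F0 x u p * Lppp x u p
        + F0p x u p * Lpp x u p = 0)
    (hzero : ∀ x ∈ Icc (0:ℝ) 1, ∀ u : ℝ,
      Lu x u 0 - Lpx x u 0 - F0 x u 0 * Lpp x u 0 = 0) :
    ∀ x ∈ Icc (0:ℝ) 1, ∀ u p : ℝ,
      Lu x u p - Lpx x u p - p * Lpu x u p - F0 x u p * Lpp x u p = 0 := by
  have hf2 : ContDiffOn ℝ 2 ↿L slab := hC3.of_le (by norm_num)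
  have hg2 : ContDiffOn ℝ 2 (slabDeriv (0, 0, 1) ↿L) slab :=
    contDiffOn_slabDeriv hC3 (by norm_num)
  have hk1 : ContDiffOn ℝ 1 (slabDeriv (0, 0, 1) (slabDeriv (0, 0, 1) ↿L)) slab :=
    contDiffOn_slabDeriv hg2 (by norm_num)
  have hfd := hf2.differentiableOn two_ne_zero
  have hgd := hg2.differentiableOn two_ne_zero
  have hkd := hk1.differentiableOn one_ne_zero
  have eu := eqOn_slabDeriv_u hfd (eqOn_refl _ _) hLu
  have ep := eqOn_slabDeriv_p hfd (eqOn_refl _ _) hLp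
  have epx := eqOn_slabDeriv_x hgd ep hLpx
  have epu := eqOn_slabDeriv_u hgd ep hLpu
  have epp := eqOn_slabDeriv_p hgd ep hLpp
  have eppx := eqOn_slabDeriv_x hkd epp hLppx
  have eppu := eqOn_slabDeriv_u hkd epp hLppu
  intro x hx u p
  have hderiv : ∀ q : ℝ, HasDerivAt
      (fun w => Lu x u w - Lpx x u w - w * Lpu x u w - F0 x u w * Lpp x u w) 0 q := by
    intro q
    have h := (((hasDerivAt_p_of_mixed hf2 eu epu hx u q).sub
      (hasDerivAt_p_of_mixed hg2 epx eppx hx u q)).sub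
      ((hasDerivAt_id q).mul (hasDerivAt_p_of_mixed hg2 epu eppu hx u q))).sub
      ((hF0p x u q).mul (hLppp x hx u q))
    refine h.congr_deriv ?_
    simp only [id]
    linear_combination -hdiff x hx u q
  have hconst := is_const_of_deriv_eq_zero (fun q => (hderiv q).differentiableAt)
    (fun q => (hderiv q).deriv) p 0
  rw [hconst, zero_mul, sub_zero]
  exact hzero x hx u
end

section
/- Let g : ℝ³ → ℝ be continuous, F⁰ : ℝ³ → ℝ be continuous, and L¹ : ℝ² → ℝ be of class C¹ with partial derivative L¹_x in the first variable continuous in the second variable. Define L⁰(x,u) := ∫₀^u [ L¹_x(x,u₁) + exp(g(x,u₁,0))·F⁰(x,u₁,0) ] du₁, and L(x,u,p) := ∫₀^p ∫₀^{p₁} exp(g(x,u,p₂)) dp₂ dp₁ + L⁰(x,u) + L¹(x,u)·p. Then L satisfies the Euler identity at p = 0: for all (x,u), L_u(x,u,0) − L_px(x,u,0) − F⁰(x,u,0)·L_pp(x,u,0) = 0. -/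
/-!
By the fundamental theorem of calculus, applied twice in `p`, `L_p(x,u,p)` equals
`∫₀^p exp (g(x,u,p₂)) dp₂ + L¹(x,u)`. Hence `L_px(x,u,0) = L¹_x(x,u)`, since the integral vanishes
identically at `p = 0` (so no regularity of `g` in `x` is needed), and
`L_pp(x,u,0) = exp (g(x,u,0))`. Also `L(x,u,0) = L⁰(x,u)`, whose `u`-derivative is the integrand
`L¹_x + exp(g) F⁰` at `p = 0`, and the three terms cancel.
-/

open Set

/-- With `g, F⁰` continuous, `L¹` of class `C¹` whose `x`-partial `L¹_x` is
continuous in the second variable, and the integration constant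
`L⁰(x,u) := ∫₀^u [L¹_x(x,u₁) + exp(g(x,u₁,0))·F⁰(x,u₁,0)] du₁`, the Lagrangian
`L(x,u,p) = ∫₀^p ∫₀^{p₁} exp(g(x,u,p₂)) dp₂ dp₁ + L⁰(x,u) + L¹(x,u)·p` satisfies the
Euler identity at `p = 0`: `L_u(x,u,0) - L_px(x,u,0) - F⁰(x,u,0)·L_pp(x,u,0) = 0`. -/
theorem euler_identity_at_p_zero
    (g F0 : ℝ → ℝ → ℝ → ℝ)
    (hg : Continuous ↿g) (hF0 : Continuous ↿F0)
    (L1 L1x : ℝ → ℝ → ℝ)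
    (hL1 : ContDiff ℝ 1 ↿L1)
    (hL1x : ∀ x u : ℝ, HasDerivAt (fun y => L1 y u) (L1x x u) x)
    (hL1xc : ∀ x : ℝ, Continuous (fun u => L1x x u))
    (L0 : ℝ → ℝ → ℝ)
    (hL0 : ∀ x u : ℝ, L0 x u =
      ∫ u1 in (0:ℝ)..u, (L1x x u1 + Real.exp (g x u1 0) * F0 x u1 0))
    (L : ℝ → ℝ → ℝ → ℝ)
    (hL : ∀ x u p : ℝ, L x u p =
      (∫ p1 in (0:ℝ)..p, ∫ p2 in (0:ℝ)..p1, Real.exp (g x u p2))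
        + L0 x u + L1 x u * p) :
    ∀ x u : ℝ,
      deriv (fun v => L x v 0) u
        - deriv (fun y => deriv (fun w => L y u w) 0) x
        - F0 x u 0 * deriv (fun w => deriv (fun w' => L x u w') w) 0 = 0 := by
  -- Sections of the jointly continuous data are continuous.
  have hE : ∀ x u : ℝ, Continuous (fun p => Real.exp (g x u p)) := fun x u =>
    Real.continuous_exp.comp
      (hg.comp (by fun_prop : Continuous (fun p : ℝ => ((x, u, p) : ℝ × ℝ × ℝ))))
  have hI : ∀ x : ℝ, Continuous (fun u => L1x x u + Real.exp (g x u 0) * F0 x u 0) := by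
    intro x
    have hc : Continuous (fun u : ℝ => ((x, u, 0) : ℝ × ℝ × ℝ)) := by fun_prop
    exact (hL1xc x).add ((Real.continuous_exp.comp (hg.comp hc)).mul (hF0.comp hc))
  have hInner : ∀ x u p : ℝ, HasDerivAt (fun q => ∫ p2 in (0:ℝ)..q, Real.exp (g x u p2))
      (Real.exp (g x u p)) p := fun x u p => (hE x u).integral_hasStrictDerivAt 0 p |>.hasDerivAt
  have hLp : ∀ x u p : ℝ, deriv (fun w => L x u w) p =
      (∫ p2 in (0:ℝ)..p, Real.exp (g x u p2)) + L1 x u := by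
    intro x u p
    have hc : Continuous (fun q => ∫ p2 in (0:ℝ)..q, Real.exp (g x u p2)) :=
      continuous_iff_continuousAt.2 fun q => (hInner x u q).continuousAt
    have h1 := (hc.integral_hasStrictDerivAt 0 p).hasDerivAt
    have h2 := (h1.add_const (L0 x u)).add ((hasDerivAt_id p).const_mul (L1 x u))
    rw [mul_one] at h2
    rw [funext (hL x u)]
    exact h2.deriv
  intro x u
  have hLu : deriv (fun v => L x v 0) u = L1x x u + Real.exp (g x u 0) * F0 x u 0 := by
    have h : (fun v => L x v 0) =
        fun v => ∫ u1 in (0:ℝ)..v, (L1x x u1 + Real.exp (g x u1 0) * F0 x u1 0) := by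
      funext v
      simp [hL, hL0]
    rw [h]
    exact ((hI x).integral_hasStrictDerivAt 0 u).hasDerivAt.deriv
  have hLpx : deriv (fun y => deriv (fun w => L y u w) 0) x = L1x x u := by
    simp only [hLp, intervalIntegral.integral_same, zero_add]
    exact (hL1x x u).deriv
  have hLpp : deriv (fun w => deriv (fun w' => L x u w') w) 0 = Real.exp (g x u 0) := by
    simp only [hLp]
    exact ((hInner x u 0).add_const (L1 x u)).deriv
  rw [hLu, hLpx, hLpp]
  ring
end

section
/- Let F⁰ : ℝ³ → ℝ be of class C¹ and let g : ℝ³ → ℝ be differentiable. Suppose that for every open interval I ⊆ ℝ and all differentiable U, P : I → ℝ satisfying U′(s) = P(s) and P′(s) = F⁰(s, U(s), P(s)) on I, the function s ↦ g(s, U(s), P(s)) has derivative −F⁰_p(s, U(s), P(s)) at every s ∈ I. Then g satisfies the transport equation g_x(x,u,p) + p·g_u(x,u,p) + F⁰(x,u,p)·g_p(x,u,p) = −F⁰_p(x,u,p) at every point (x,u,p) ∈ ℝ³. -/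
/-!
By Picard–Lindelöf a characteristic `(U, P)` passes through every point `(x, u, p)`
(`exists_characteristic`). Along it, the derivative of `s ↦ g(s, U(s), P(s))` at `s = x` is
`g_x + p·g_u + F⁰·g_p` by the chain rule (`hasDerivAt_along_curve`) and `-F⁰_p` by hypothesis;
derivatives being unique, the two agree.
-/

open Set

/-- Local existence for the non-autonomous system `U′ = P`, `P′ = F(s, U, P)`, obtained from the
autonomous Picard–Lindelöf theorem for the field `(x, u, p) ↦ (1, p, F(x, u, p))` on `ℝ³`. -/
lemma exists_characteristic (F : ℝ → ℝ → ℝ → ℝ) (hF : ContDiff ℝ 1 ↿F) (x u p : ℝ) :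
    ∃ (ε : ℝ) (U P : ℝ → ℝ), 0 < ε ∧ U x = u ∧ P x = p ∧
      (∀ s ∈ Ioo (x - ε) (x + ε), HasDerivAt U (P s) s) ∧
      ∀ s ∈ Ioo (x - ε) (x + ε), HasDerivAt P (F s (U s) (P s)) s := by
  have hV : ContDiff ℝ 1 (fun z : ℝ × ℝ × ℝ => ((1 : ℝ), z.2.2, (↿F) z)) := by
    fun_prop
  obtain ⟨α, hα, ε, hε, hsol⟩ :=
    ContDiffAt.exists_forall_mem_closedBall_exists_eq_forall_mem_Ioo_hasDerivAt₀
      (hV.contDiffAt (x := (x, u, p))) x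
  have h1 : ∀ s ∈ Ioo (x - ε) (x + ε), HasDerivAt (fun t => (α t).1) 1 s :=
    fun s hs => (hsol s hs).fst
  -- The first coordinate has slope `1` and equals `x` at time `x`, so it is the time itself.
  have htime : EqOn (fun t => (α t).1) id (Ioo (x - ε) (x + ε)) := by
    refine isOpen_Ioo.eqOn_of_deriv_eq isPreconnected_Ioo
      (fun s hs => (h1 s hs).differentiableAt.differentiableWithinAt)
      differentiableOn_id (fun s hs => ?_) (x := x) ⟨by linarith, by linarith⟩ (by simp [hα])
    rw [(h1 s hs).deriv, deriv_id]
  refine ⟨ε, fun t => (α t).2.1, fun t => (α t).2.2, hε, by simp [hα], by simp [hα],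
    fun s hs => (hsol s hs).snd.fst, fun s hs => ?_⟩
  have h := (hsol s hs).snd.snd
  have hs1 : (α s).1 = s := htime hs
  change HasDerivAt (fun t => (α t).2.2) (F (α s).1 (α s).2.1 (α s).2.2) s at h
  rwa [hs1] at h

/-- Chain rule along a curve `s ↦ (s, U(s), P(s))`, in terms of the partial derivatives `a`, `b`, `c`
of `g` at the base point. -/
lemma hasDerivAt_along_curve (g : ℝ → ℝ → ℝ → ℝ) (U P : ℝ → ℝ) {x a b c U' P' : ℝ}
    (hg : DifferentiableAt ℝ (↿g) (x, U x, P x))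
    (ha : HasDerivAt (fun y => g y (U x) (P x)) a x)
    (hb : HasDerivAt (fun v => g x v (P x)) b (U x))
    (hc : HasDerivAt (fun w => g x (U x) w) c (P x))
    (hU : HasDerivAt U U' x) (hP : HasDerivAt P P' x) :
    HasDerivAt (fun s => g s (U s) (P s)) (a + U' * b + P' * c) x := by
  obtain ⟨D, hgD⟩ := hg
  have key : ∀ (γ : ℝ → ℝ × ℝ × ℝ) (γ' : ℝ × ℝ × ℝ) (t : ℝ), γ t = (x, U x, P x) →
      HasDerivAt γ γ' t → HasDerivAt (fun s => g (γ s).1 (γ s).2.1 (γ s).2.2) (D γ') t := by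
    intro γ γ' t ht hγ
    rw [← ht] at hgD
    exact hgD.comp_hasDerivAt t hγ
  have ea : D (1, 0, 0) = a :=
    (key (fun y => (y, U x, P x)) _ x rfl ((hasDerivAt_id x).prodMk
      ((hasDerivAt_const x (U x)).prodMk (hasDerivAt_const x (P x))))).unique ha
  have eb : D (0, 1, 0) = b :=
    (key (fun v => (x, v, P x)) _ (U x) rfl ((hasDerivAt_const (U x) x).prodMk
      ((hasDerivAt_id (U x)).prodMk (hasDerivAt_const (U x) (P x))))).unique hb
  have ec : D (0, 0, 1) = c :=
    (key (fun w => (x, U x, w)) _ (P x) rfl ((hasDerivAt_const (P x) x).prodMk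
      ((hasDerivAt_const (P x) (U x)).prodMk (hasDerivAt_id (P x))))).unique hc
  have hcurve : HasDerivAt (fun s => g s (U s) (P s)) (D (1, U', P')) x :=
    key (fun s => (s, U s, P s)) _ x rfl ((hasDerivAt_id x).prodMk (hU.prodMk hP))
  have hsplit : ((1, U', P') : ℝ × ℝ × ℝ) =
      (1, 0, 0) + U' • ((0, 1, 0) : ℝ × ℝ × ℝ) + P' • ((0, 0, 1) : ℝ × ℝ × ℝ) := by
    simp
  rwa [hsplit, map_add, map_add, map_smul, map_smul, ea, eb, ec, smul_eq_mul, smul_eq_mul]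
    at hcurve

/-- Converse of the method of characteristics. Let `F⁰ : ℝ³ → ℝ` be `C¹`
and `g : ℝ³ → ℝ` be differentiable. If along every solution `U′ = P`,
`P′ = F⁰(s,U,P)` of the characteristic ODE on any open interval, the function
`s ↦ g(s,U(s),P(s))` has derivative `-F⁰_p(s,U(s),P(s))`, then `g` satisfies the
transport equation `g_x + p·g_u + F⁰·g_p = -F⁰_p` at every point of `ℝ³`. -/
theorem transport_from_characteristics
    (F0 F0p g gx gu gp : ℝ → ℝ → ℝ → ℝ)
    (hF0 : ContDiff ℝ 1 ↿F0)
    (hF0p : ∀ x u p : ℝ, HasDerivAt (fun w => F0 x u w) (F0p x u p) p)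
    (hg : Differentiable ℝ ↿g)
    (hgx : ∀ x u p : ℝ, HasDerivAt (fun y => g y u p) (gx x u p) x)
    (hgu : ∀ x u p : ℝ, HasDerivAt (fun v => g x v p) (gu x u p) u)
    (hgp : ∀ x u p : ℝ, HasDerivAt (fun w => g x u w) (gp x u p) p)
    (hchar : ∀ (a b : ℝ) (U P : ℝ → ℝ),
      (∀ s ∈ Ioo a b, HasDerivAt U (P s) s) →
      (∀ s ∈ Ioo a b, HasDerivAt P (F0 s (U s) (P s)) s) →
      ∀ s ∈ Ioo a b,
        HasDerivAt (fun s' => g s' (U s') (P s')) (-(F0p s (U s) (P s))) s) :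
    ∀ x u p : ℝ,
      gx x u p + p * gu x u p + F0 x u p * gp x u p = -(F0p x u p) := by
  intro x u p
  obtain ⟨ε, U, P, hε, rfl, rfl, hU, hP⟩ := exists_characteristic F0 hF0 x u p
  have hx : x ∈ Ioo (x - ε) (x + ε) := ⟨by linarith, by linarith⟩
  exact (hasDerivAt_along_curve g U P (hg _) (hgx _ _ _) (hgu _ _ _) (hgp _ _ _)
    (hU x hx) (hP x hx)).unique (hchar _ _ U P hU hP x hx)
end

section
/- Let a, h : ℝ³ → ℝ be continuous with a(x,u,p) ≥ ε for some ε > 0 and all (x,u,p), and let L : ℝ³ → ℝ be of class C² satisfying L_u − L_px − p·L_pu + (h(x,u,p)/a(x,u,p))·L_pp = 0 on [0,1] × ℝ². Let u be a classical solution of the quasilinear equation u_t = a(x,u,u_x)·u_xx + h(x,u,u_x) on (0,T) × [0,1] (u, u_t, u_x, u_xx, u_tx continuous and bounded) with boundary condition L_p(ι, u(t,ι), u_x(t,ι))·u_t(t,ι) = 0 for ι ∈ {0,1}. Then for each t ∈ (0,T), E(t) := ∫₀¹ L(x,u(t,x),u_x(t,x)) dx is differentiable with E′(t) = −∫₀¹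 (L_pp(x,u(t,x),u_x(t,x)) / a(x,u(t,x),u_x(t,x))) · u_t(t,x)² dx. -/
open Set

/-!
Differentiating under the integral sign gives `E' = ∫ (L_u u_t + L_p u_tx)`. The hypotheses only
say that `u_tx` is the time derivative of `u_x`; that it is also the space derivative of `u_t`
follows by differentiating `u(t,y) - u(t,0) = ∫₀^y u_x(t,z) dz` in time
(`hasDerivAt_mixed`). Integration by parts then moves the space derivative from `u_t` to `L_p`,
the boundary terms vanish by the boundary condition, and the chain rule turns the integrand into
`(L_u - L_px - u_x L_pu - L_pp u_xx) u_t`. The equation for `L` and the PDE identify this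
with `-(L_pp / a) u_t²`.
-/

section PartialDerivatives

variable {G : ℝ → ℝ → ℝ → ℝ}

lemma fderiv_fst_of_hasDerivAt (hG : Differentiable ℝ ↿G) {x v p d : ℝ}
    (h : HasDerivAt (fun x' => G x' v p) d x) : fderiv ℝ ↿G (x, v, p) (1, 0, 0) = d := by
  have h1 : HasDerivAt (fun x' : ℝ => ((x', v, p) : ℝ × ℝ × ℝ)) (1, 0, 0) x :=
    (hasDerivAt_id x).prodMk (hasDerivAt_const x (v, p))
  have h2 := (hG (x, v, p)).hasFDerivAt.comp_hasDerivAt x h1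
  exact h2.unique h

lemma fderiv_snd_of_hasDerivAt (hG : Differentiable ℝ ↿G) {x v p d : ℝ}
    (h : HasDerivAt (fun v' => G x v' p) d v) : fderiv ℝ ↿G (x, v, p) (0, 1, 0) = d := by
  have h1 : HasDerivAt (fun v' : ℝ => ((x, v', p) : ℝ × ℝ × ℝ)) (0, 1, 0) v :=
    (hasDerivAt_const v x).prodMk ((hasDerivAt_id v).prodMk (hasDerivAt_const v p))
  have h2 := (hG (x, v, p)).hasFDerivAt.comp_hasDerivAt v h1
  exact h2.unique h

lemma fderiv_thd_of_hasDerivAt (hG : Differentiable ℝ ↿G) {x v p d : ℝ}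
    (h : HasDerivAt (fun p' => G x v p') d p) : fderiv ℝ ↿G (x, v, p) (0, 0, 1) = d := by
  have h1 : HasDerivAt (fun p' : ℝ => ((x, v, p') : ℝ × ℝ × ℝ)) (0, 0, 1) p :=
    (hasDerivAt_const p x).prodMk ((hasDerivAt_const p v).prodMk (hasDerivAt_id p))
  have h2 := (hG (x, v, p)).hasFDerivAt.comp_hasDerivAt p h1
  exact h2.unique h

lemma hasDerivWithinAt_comp_three (hG : Differentiable ℝ ↿G) {α β γ : ℝ → ℝ} {α' β' γ' r : ℝ}
    {s : Set ℝ} (hα : HasDerivWithinAt α α' s r) (hβ : HasDerivWithinAt β β' s r)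
    (hγ : HasDerivWithinAt γ γ' s r) :
    HasDerivWithinAt (fun y => G (α y) (β y) (γ y))
      (fderiv ℝ ↿G (α r, β r, γ r) (1, 0, 0) * α' + fderiv ℝ ↿G (α r, β r, γ r) (0, 1, 0) * β'
        + fderiv ℝ ↿G (α r, β r, γ r) (0, 0, 1) * γ') s r := by
  have h1 := (hG (α r, β r, γ r)).hasFDerivAt.comp_hasDerivWithinAt r (hα.prodMk (hβ.prodMk hγ))
  have h2 : ((α', β', γ') : ℝ × ℝ × ℝ)
      = α' • ((1, 0, 0) : ℝ × ℝ × ℝ) + β' • ((0, 1, 0) : ℝ × ℝ × ℝ)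
        + γ' • ((0, 0, 1) : ℝ × ℝ × ℝ) := by simp
  refine HasDerivWithinAt.congr_deriv (f' := _) h1 ?_
  rw [h2, map_add, map_add, map_smul, map_smul, map_smul]
  simp only [smul_eq_mul]
  ring

end PartialDerivatives

/-- Leibniz rule on a strip. The derivative only needs to be continuous there: compactness of
`[t - δ, t + δ] × [0, 1]` supplies the dominating constant. -/
lemma hasDerivAt_integral_strip {T : ℝ} {f f' : ℝ → ℝ → ℝ}
    (hf : ∀ t ∈ Ioo (0:ℝ) T, ContinuousOn (f t) (Icc 0 1))
    (hd : ∀ t ∈ Ioo (0:ℝ) T, ∀ x ∈ Icc (0:ℝ) 1, HasDerivAt (fun s => f s x) (f' t x) t)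
    (hf' : ContinuousOn (fun q : ℝ × ℝ => f' q.1 q.2) (Ioo (0:ℝ) T ×ˢ Icc (0:ℝ) 1))
    {t : ℝ} (ht : t ∈ Ioo (0:ℝ) T) {y : ℝ} (hy : y ∈ Icc (0:ℝ) 1) :
    HasDerivAt (fun s => ∫ x in (0:ℝ)..y, f s x) (∫ x in (0:ℝ)..y, f' t x) t := by
  obtain ⟨δ, hδ, hsub⟩ := Metric.nhds_basis_closedBall.mem_iff.1 (isOpen_Ioo.mem_nhds ht)
  obtain ⟨C, hC⟩ := ((isCompact_closedBall t δ).prod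
    (isCompact_Icc (a := (0:ℝ)) (b := 1))).exists_bound_of_continuousOn
      (hf'.mono (prod_mono hsub Subset.rfl))
  have hIcc : uIcc 0 y ⊆ Icc (0:ℝ) 1 := by
    rw [uIcc_of_le hy.1]; exact Icc_subset_Icc le_rfl hy.2
  have hIoc : uIoc 0 y ⊆ Icc (0:ℝ) 1 := uIoc_subset_uIcc.trans hIcc
  have hslice : ContinuousOn (f' t) (Icc 0 1) :=
    hf'.comp (f := fun x => (t, x)) (by fun_prop) fun x hx => ⟨ht, hx⟩
  have hint : ∀ s ∈ Ioo (0:ℝ) T, IntervalIntegrable (f s) MeasureTheory.volume 0 y :=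
    fun s hs => ((hf s hs).mono hIcc).intervalIntegrable
  refine (intervalIntegral.hasDerivAt_integral_of_dominated_loc_of_deriv_le
    (F := f) (F' := f') (bound := fun _ => C)
    (Metric.closedBall_mem_nhds t hδ) ?_ (hint t ht) ?_ ?_ ?_ ?_).2
  · filter_upwards [isOpen_Ioo.mem_nhds ht] with s hs
    exact (intervalIntegrable_iff.1 (hint s hs)).aestronglyMeasurable
  · exact (intervalIntegrable_iff.1
      (hslice.mono hIcc).intervalIntegrable).aestronglyMeasurable
  · exact Filter.Eventually.of_forall fun x hx s hs => hC (s, x) ⟨hs, hIoc hx⟩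
  · exact intervalIntegrable_const
  · exact Filter.Eventually.of_forall fun x hx s hs => hd s (hsub hs) x (hIoc hx)

/-- Symmetry of the mixed partials without joint `C²` regularity: the time derivative `utx` of `u_x`
is also the space derivative of `u_t`. -/
lemma hasDerivAt_mixed {T : ℝ} {u ut ux utx : ℝ → ℝ → ℝ}
    (hut : ∀ t ∈ Ioo (0:ℝ) T, ∀ x ∈ Icc (0:ℝ) 1, HasDerivAt (fun s => u s x) (ut t x) t)
    (hux : ∀ t ∈ Ioo (0:ℝ) T, ∀ x ∈ Icc (0:ℝ) 1,
      HasDerivWithinAt (fun y => u t y) (ux t x) (Icc (0:ℝ) 1) x)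
    (hutx : ∀ t ∈ Ioo (0:ℝ) T, ∀ x ∈ Icc (0:ℝ) 1, HasDerivAt (fun s => ux s x) (utx t x) t)
    (huxcont : ∀ t ∈ Ioo (0:ℝ) T, ContinuousOn (ux t) (Icc 0 1))
    (hutxcont : ContinuousOn (fun q : ℝ × ℝ => utx q.1 q.2) (Ioo (0:ℝ) T ×ˢ Icc (0:ℝ) 1))
    {t : ℝ} (ht : t ∈ Ioo (0:ℝ) T) {x : ℝ} (hx : x ∈ Ioo (0:ℝ) 1) :
    HasDerivAt (ut t) (utx t x) x := by
  have hslice : ContinuousOn (utx t) (Icc 0 1) :=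
    hutxcont.comp (f := fun x => (t, x)) (by fun_prop) fun x hx => ⟨ht, hx⟩
  have key : ∀ y ∈ Icc (0:ℝ) 1, ut t y = ut t 0 + ∫ z in (0:ℝ)..y, utx t z := by
    intro y hy
    have hI := hasDerivAt_integral_strip huxcont hutx hutxcont ht hy
    have hD := (hut t ht y hy).sub (hut t ht 0 (by simp))
    have hsub : Icc 0 y ⊆ Icc (0:ℝ) 1 := Icc_subset_Icc le_rfl hy.2
    have hE : (fun s => ∫ z in (0:ℝ)..y, ux s z) =ᶠ[nhds t]
        ((fun s => u s y) - fun s => u s 0) := by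
      filter_upwards [isOpen_Ioo.mem_nhds ht] with s hs
      refine intervalIntegral.integral_eq_sub_of_hasDerivAt_of_le hy.1
        (fun z hz => ((hux s hs z (hsub hz)).continuousWithinAt.mono hsub)) ?_ ?_
      · intro z hz
        have hz' : z ∈ Ioo (0:ℝ) 1 := ⟨hz.1, hz.2.trans_le hy.2⟩
        exact (hux s hs z (Ioo_subset_Icc_self hz')).hasDerivAt (Icc_mem_nhds hz'.1 hz'.2)
      · exact ((huxcont s hs).mono (by rwa [uIcc_of_le hy.1])).intervalIntegrable
    linarith [hD.unique (hI.congr_of_eventuallyEq hE.symm)]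
  have hx' := Ioo_subset_Icc_self hx
  have hnhds : Icc (0:ℝ) 1 ∈ nhds x := Icc_mem_nhds hx.1 hx.2
  have hF : HasDerivAt (fun y => ∫ z in (0:ℝ)..y, utx t z) (utx t x) x := by
    refine intervalIntegral.integral_hasDerivAt_right
      ((hslice.mono ?_).intervalIntegrable)
      ((hslice.mono Ioo_subset_Icc_self).stronglyMeasurableAtFilter isOpen_Ioo x hx)
      (hslice.continuousAt hnhds)
    rw [uIcc_of_le hx'.1]; exact Icc_subset_Icc le_rfl hx'.2
  refine (hF.const_add (ut t 0)).congr_of_eventuallyEq ?_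
  filter_upwards [hnhds] with y hy using key y hy

/-- Quasilinear case (Matano's Lyapunov function). Let `a, h : ℝ³ → ℝ` be
continuous with `a ≥ ε > 0`, and let `L : ℝ³ → ℝ` be `C²` satisfying
`L_u - L_px - p·L_pu + (h/a)·L_pp = 0` on `[0,1] × ℝ²`. If `u` is a classical solution of
`u_t = a(x,u,u_x)·u_xx + h(x,u,u_x)` on `(0,T) × [0,1]` with boundary condition
`L_p(ι,u,u_x)·u_t = 0` at `ι ∈ {0,1}`, then for each `t ∈ (0,T)` the energy
`E(t) = ∫₀¹ L(x,u,u_x) dx` is differentiable with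
`E′(t) = -∫₀¹ (L_pp/a)·u_t² dx`. -/
theorem quasilinear_energy_decay
    (a h : ℝ → ℝ → ℝ → ℝ)
    (hac : Continuous ↿a) (hhc : Continuous ↿h)
    (ε : ℝ) (hε : 0 < ε)
    (ha : ∀ x v p : ℝ, ε ≤ a x v p)
    (L Lu Lp Lpx Lpu Lpp : ℝ → ℝ → ℝ → ℝ)
    (hLC2 : ContDiff ℝ 2 ↿L)
    (hLu : ∀ x v p : ℝ, HasDerivAt (fun v' => L x v' p) (Lu x v p) v)
    (hLp : ∀ x v p : ℝ, HasDerivAt (fun p' => L x v p') (Lp x v p) p)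
    (hLpx : ∀ x v p : ℝ, HasDerivAt (fun x' => Lp x' v p) (Lpx x v p) x)
    (hLpu : ∀ x v p : ℝ, HasDerivAt (fun v' => Lp x v' p) (Lpu x v p) v)
    (hLpp : ∀ x v p : ℝ, HasDerivAt (fun p' => Lp x v p') (Lpp x v p) p)
    (hEuler : ∀ x ∈ Icc (0:ℝ) 1, ∀ v p : ℝ,
      Lu x v p - Lpx x v p - p * Lpu x v p
        + (h x v p / a x v p) * Lpp x v p = 0)
    (T : ℝ) (hT : 0 < T)
    (u ut ux uxx utx : ℝ → ℝ → ℝ)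
    (hut : ∀ t ∈ Ioo (0:ℝ) T, ∀ x ∈ Icc (0:ℝ) 1,
      HasDerivAt (fun s => u s x) (ut t x) t)
    (hux : ∀ t ∈ Ioo (0:ℝ) T, ∀ x ∈ Icc (0:ℝ) 1,
      HasDerivWithinAt (fun y => u t y) (ux t x) (Icc (0:ℝ) 1) x)
    (huxx : ∀ t ∈ Ioo (0:ℝ) T, ∀ x ∈ Icc (0:ℝ) 1,
      HasDerivWithinAt (fun y => ux t y) (uxx t x) (Icc (0:ℝ) 1) x)
    (hutx : ∀ t ∈ Ioo (0:ℝ) T, ∀ x ∈ Icc (0:ℝ) 1,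
      HasDerivAt (fun s => ux s x) (utx t x) t)
    (hucont : ContinuousOn (fun q : ℝ × ℝ => u q.1 q.2) (Ioo (0:ℝ) T ×ˢ Icc (0:ℝ) 1))
    (hutcont : ContinuousOn (fun q : ℝ × ℝ => ut q.1 q.2) (Ioo (0:ℝ) T ×ˢ Icc (0:ℝ) 1))
    (huxcont : ContinuousOn (fun q : ℝ × ℝ => ux q.1 q.2) (Ioo (0:ℝ) T ×ˢ Icc (0:ℝ) 1))
    (huxxcont : ContinuousOn (fun q : ℝ × ℝ => uxx q.1 q.2) (Ioo (0:ℝ) T ×ˢ Icc (0:ℝ) 1))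
    (hutxcont : ContinuousOn (fun q : ℝ × ℝ => utx q.1 q.2) (Ioo (0:ℝ) T ×ˢ Icc (0:ℝ) 1))
    (hbdd : ∃ C : ℝ, ∀ t ∈ Ioo (0:ℝ) T, ∀ x ∈ Icc (0:ℝ) 1,
      |u t x| ≤ C ∧ |ut t x| ≤ C ∧ |ux t x| ≤ C ∧ |uxx t x| ≤ C ∧ |utx t x| ≤ C)
    (hPDE : ∀ t ∈ Ioo (0:ℝ) T, ∀ x ∈ Icc (0:ℝ) 1,
      ut t x = a x (u t x) (ux t x) * uxx t x + h x (u t x) (ux t x))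
    (hBC : ∀ t ∈ Ioo (0:ℝ) T,
      Lp 0 (u t 0) (ux t 0) * ut t 0 = 0 ∧
      Lp 1 (u t 1) (ux t 1) * ut t 1 = 0) :
    ∀ t ∈ Ioo (0:ℝ) T,
      HasDerivAt (fun s => ∫ x in (0:ℝ)..1, L x (u s x) (ux s x))
        (-(∫ x in (0:ℝ)..1,
            Lpp x (u t x) (ux t x) / a x (u t x) (ux t x)
              * (ut t x) ^ 2)) t := by
  intro t ht
  have hLd : Differentiable ℝ ↿L := hLC2.differentiable (by norm_num)
  have hLp1 : ContDiff ℝ 1 ↿Lp := by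
    have h1 : (↿Lp : ℝ × ℝ × ℝ → ℝ) = fun q => fderiv ℝ ↿L q (0, 0, 1) := by
      funext ⟨x, v, p⟩
      exact (fderiv_thd_of_hasDerivAt hLd (hLp x v p)).symm
    rw [h1]
    exact (hLC2.fderiv_right (m := 1) (by norm_num)).clm_apply contDiff_const
  have hLpd : Differentiable ℝ ↿Lp := hLp1.differentiable (by norm_num)
  have hLuc : Continuous ↿Lu := by
    have h1 : (↿Lu : ℝ × ℝ × ℝ → ℝ) = fun q => fderiv ℝ ↿L q (0, 1, 0) := by
      funext ⟨x, v, p⟩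
      exact (fderiv_snd_of_hasDerivAt hLd (hLu x v p)).symm
    rw [h1]
    exact (hLC2.continuous_fderiv (by norm_num)).clm_apply continuous_const
  have hDLp : Continuous (fderiv ℝ (↿Lp : ℝ × ℝ × ℝ → ℝ)) := hLp1.continuous_fderiv (by norm_num)
  have hjet : ContinuousOn (fun q : ℝ × ℝ => (q.2, u q.1 q.2, ux q.1 q.2))
      (Ioo (0:ℝ) T ×ˢ Icc (0:ℝ) 1) := continuousOn_snd.prodMk (hucont.prodMk huxcont)
  have slice : ∀ {f : ℝ × ℝ → ℝ}, ContinuousOn f (Ioo (0:ℝ) T ×ˢ Icc (0:ℝ) 1) →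
      ∀ s ∈ Ioo (0:ℝ) T, ContinuousOn (fun x => f (s, x)) (Icc 0 1) := fun hf s hs =>
    hf.comp (f := fun x => (s, x)) (by fun_prop) fun x hx => ⟨hs, hx⟩
  have hLpc : ContinuousOn (fun q : ℝ × ℝ => Lp q.2 (u q.1 q.2) (ux q.1 q.2))
      (Ioo (0:ℝ) T ×ˢ Icc (0:ℝ) 1) := hLp1.continuous.comp_continuousOn hjet
  have hLucj : ContinuousOn (fun q : ℝ × ℝ => Lu q.2 (u q.1 q.2) (ux q.1 q.2))
      (Ioo (0:ℝ) T ×ˢ Icc (0:ℝ) 1) := hLuc.comp_continuousOn hjet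
  have hE := hasDerivAt_integral_strip (T := T) (f := fun s x => L x (u s x) (ux s x))
    (f' := fun s x => Lu x (u s x) (ux s x) * ut s x + Lp x (u s x) (ux s x) * utx s x)
    (slice (f := fun q => L q.2 (u q.1 q.2) (ux q.1 q.2))
      (hLC2.continuous.comp_continuousOn hjet))
    (fun s hs x hx => by
      have h1 := hasDerivWithinAt_comp_three hLd (hasDerivWithinAt_const s univ x)
        (hut s hs x hx).hasDerivWithinAt (hutx s hs x hx).hasDerivWithinAt
      rw [hasDerivWithinAt_univ, fderiv_snd_of_hasDerivAt hLd (hLu _ _ _),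
        fderiv_thd_of_hasDerivAt hLd (hLp _ _ _), mul_zero, zero_add] at h1
      exact h1)
    ((hLucj.mul hutcont).add (hLpc.mul hutxcont)) ht (right_mem_Icc.2 zero_le_one)
  refine hE.congr_deriv ?_
  -- the total space derivative of `L_p` along the solution
  let D : ℝ → ℝ := fun x => Lpx x (u t x) (ux t x) + Lpu x (u t x) (ux t x) * ux t x
    + Lpp x (u t x) (ux t x) * uxx t x
  have hD : ∀ x ∈ Icc (0:ℝ) 1,
      HasDerivWithinAt (fun y => Lp y (u t y) (ux t y)) (D x) (Icc 0 1) x := by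
    intro x hx
    have h1 := hasDerivWithinAt_comp_three hLpd (hasDerivWithinAt_id x (Icc 0 1))
      (hux t ht x hx) (huxx t ht x hx)
    simp only [id] at h1
    rwa [fderiv_fst_of_hasDerivAt hLpd (hLpx _ _ _), fderiv_snd_of_hasDerivAt hLpd (hLpu _ _ _),
      fderiv_thd_of_hasDerivAt hLpd (hLpp _ _ _), mul_one] at h1
  have hDc : ContinuousOn D (Icc 0 1) := by
    have hj := slice (f := fun q => fderiv ℝ ↿Lp (q.2, u q.1 q.2, ux q.1 q.2) (1, 0, 0)
        + fderiv ℝ ↿Lp (q.2, u q.1 q.2, ux q.1 q.2) (0, 1, 0) * ux q.1 q.2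
        + fderiv ℝ ↿Lp (q.2, u q.1 q.2, ux q.1 q.2) (0, 0, 1) * uxx q.1 q.2)
      (by
        have hc := hDLp.comp_continuousOn hjet
        exact ((hc.clm_apply continuousOn_const).add
          ((hc.clm_apply continuousOn_const).mul huxcont)).add
          ((hc.clm_apply continuousOn_const).mul huxxcont)) t ht
    refine hj.congr fun x _ => ?_
    simp only [D]
    rw [fderiv_fst_of_hasDerivAt hLpd (hLpx _ _ _), fderiv_snd_of_hasDerivAt hLpd (hLpu _ _ _),
      fderiv_thd_of_hasDerivAt hLpd (hLpp _ _ _)]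
  have hutc : ContinuousOn (ut t) (Icc 0 1) := slice hutcont t ht
  have hutxc : ContinuousOn (utx t) (Icc 0 1) := slice hutxcont t ht
  have hLpt := slice hLpc t ht
  have hLut := slice hLucj t ht
  have hu01 : uIcc (0:ℝ) 1 = Icc 0 1 := uIcc_of_le zero_le_one
  have toInt : ∀ {f : ℝ → ℝ}, ContinuousOn f (Icc 0 1) →
      IntervalIntegrable f MeasureTheory.volume 0 1 :=
    fun hf => (hf.mono hu01.le).intervalIntegrable
  have hparts : ∫ x in (0:ℝ)..1, Lp x (u t x) (ux t x) * utx t x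
      = -∫ x in (0:ℝ)..1, D x * ut t x := by
    rw [intervalIntegral.integral_mul_deriv_eq_deriv_mul_of_hasDerivAt
      (u := fun x => Lp x (u t x) (ux t x)) (v := ut t) (u' := D)
      (by rwa [hu01]) (by rwa [hu01]) ?_ ?_ (toInt hDc) (toInt hutxc),
      (hBC t ht).1, (hBC t ht).2]
    · ring
    · intro x hx
      rw [min_eq_left zero_le_one, max_eq_right zero_le_one] at hx
      exact (hD x (Ioo_subset_Icc_self hx)).hasDerivAt (Icc_mem_nhds hx.1 hx.2)
    · intro x hx
      rw [min_eq_left zero_le_one, max_eq_right zero_le_one] at hx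
      exact hasDerivAt_mixed hut hux hutx (slice huxcont) hutxcont ht hx
  have hi1 : IntervalIntegrable (fun x => Lu x (u t x) (ux t x) * ut t x)
      MeasureTheory.volume 0 1 := toInt (hLut.mul hutc)
  have hi2 : IntervalIntegrable (fun x => Lp x (u t x) (ux t x) * utx t x)
      MeasureTheory.volume 0 1 := toInt (hLpt.mul hutxc)
  have hi3 : IntervalIntegrable (fun x => D x * ut t x)
      MeasureTheory.volume 0 1 := toInt (hDc.mul hutc)
  rw [intervalIntegral.integral_add hi1 hi2, hparts, ← sub_eq_add_neg,
    ← intervalIntegral.integral_sub hi1 hi3, ← intervalIntegral.integral_neg]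
  refine intervalIntegral.integral_congr fun x hx => ?_
  rw [hu01] at hx
  have ha0 : a x (u t x) (ux t x) ≠ 0 := (hε.trans_le (ha _ _ _)).ne'
  have hEu := hEuler x hx (u t x) (ux t x)
  have hP := hPDE t ht x hx
  have huxx' : uxx t x = (ut t x - h x (u t x) (ux t x)) / a x (u t x) (ux t x) := by
    rw [eq_div_iff ha0]; linarith
  simp only [D]
  rw [huxx']
  linear_combination (ut t x) * hEu
end

section
/- Let F : ℝ⁴ → ℝ be continuous, define F⁰(x,u,p) := F(x,u,p,0), and let L : ℝ³ → ℝ be of class C² satisfying L_u(x,u,p) − L_px(x,u,p) − p·L_pu(x,u,p) − F⁰(x,u,p)·L_pp(x,u,p) = 0 for all (x,u,p) ∈ [0,1] × ℝ². Let u be a classical solution of u_xx(t,x) = F(x, u(t,x), u_x(t,x), u_t(t,x)) on (0,T) × [0,1] (u, u_t, u_x, u_xx, u_tx continuous and bounded) with boundary condition L_p(ι, u(t,ι), u_x(t,ι))·u_t(t,ι) = 0 for ι ∈ {0,1}. Then for each t ∈ (0,T), E(t) := ∫₀¹ L(x,u(t,x),u_x(t,x)) dx is differentiable with E′(t) = −∫₀¹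 L_pp(x, u(t,x), u_x(t,x)) · ( F(x, u(t,x), u_x(t,x), u_t(t,x)) − F⁰(x, u(t,x), u_x(t,x)) ) · u_t(t,x) dx. -/
/-!
The time derivative of the energy density is `L_u u_t + L_p u_tx`. Since
`∂ₓ(L_p(x,u,u_x) u_t) = (L_px + u_x L_pu + u_xx L_pp) u_t + L_p u_tx`, the Euler identity and the
equation `u_xx = F` turn this density into `∂ₓ(L_p u_t) - L_pp (F - F⁰) u_t`, and the boundary
condition makes the total derivative integrate to zero.

Two points carry the analysis. Differentiation under the integral sign
(`hasDerivAt_integral_of_continuousOn`) needs only continuity of the derivative, because the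
space interval is compact. The hypotheses provide `∂ₜ u_x = u_tx`, whereas the computation uses
`∂ₓ u_t = u_tx`; the exchange (`hasDerivAt_ut`) follows by differentiating
`u(t,x) - u(t,0) = ∫₀ˣ u_x(t,z) dz` in `t`.
-/

open Set

/-- Leibniz rule on a compact interval; the dominating constant comes from compactness of
`[t - δ, t + δ] × [a, b]`. -/
lemma hasDerivAt_integral_of_continuousOn {T a b : ℝ} (hab : a ≤ b) (g g' : ℝ → ℝ → ℝ)
    (hg : ContinuousOn (fun q : ℝ × ℝ => g q.1 q.2) (Ioo (0:ℝ) T ×ˢ Icc a b))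
    (hg' : ContinuousOn (fun q : ℝ × ℝ => g' q.1 q.2) (Ioo (0:ℝ) T ×ˢ Icc a b))
    (hd : ∀ t ∈ Ioo (0:ℝ) T, ∀ x ∈ Icc a b, HasDerivAt (fun s => g s x) (g' t x) t)
    {t : ℝ} (ht : t ∈ Ioo (0:ℝ) T) :
    HasDerivAt (fun s => ∫ x in a..b, g s x) (∫ x in a..b, g' t x) t := by
  have slice : ∀ f : ℝ → ℝ → ℝ,
      ContinuousOn (fun q : ℝ × ℝ => f q.1 q.2) (Ioo (0:ℝ) T ×ˢ Icc a b) →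
      ∀ s ∈ Ioo (0:ℝ) T, ContinuousOn (f s) (Icc a b) := fun f hf s hs =>
    hf.comp (f := fun x : ℝ => (s, x)) (by fun_prop) (fun x hx => ⟨hs, hx⟩)
  obtain ⟨δ, hδ, hsub⟩ := Metric.nhds_basis_closedBall.mem_iff.1 (isOpen_Ioo.mem_nhds ht)
  obtain ⟨C, hC⟩ := ((isCompact_closedBall t δ).prod (isCompact_Icc (a := a) (b := b))
    ).exists_bound_of_continuousOn (hg'.mono (prod_mono hsub subset_rfl))
  have hint : ∀ f : ℝ → ℝ, ContinuousOn f (Icc a b) →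
      IntervalIntegrable f MeasureTheory.volume a b := fun f hf =>
    hf.intervalIntegrable_of_Icc hab
  have hsubI : uIoc a b ⊆ Icc a b := by
    rw [uIoc_of_le hab]; exact Ioc_subset_Icc_self
  refine (intervalIntegral.hasDerivAt_integral_of_dominated_loc_of_deriv_le
    (F := g) (F' := g') (bound := fun _ => C) (Metric.closedBall_mem_nhds t hδ)
    ?_ (hint _ (slice g hg t ht)) ?_ ?_ ?_ ?_).2
  · filter_upwards [isOpen_Ioo.mem_nhds ht] with s hs
    exact (intervalIntegrable_iff.1 (hint _ (slice g hg s hs))).aestronglyMeasurable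
  · exact (intervalIntegrable_iff.1 (hint _ (slice g' hg' t ht))).aestronglyMeasurable
  · exact Filter.Eventually.of_forall fun x hx s hs => hC (s, x) ⟨hs, hsubI hx⟩
  · exact intervalIntegrable_const
  · exact Filter.Eventually.of_forall fun x hx s hs => hd s (hsub hs) x (hsubI hx)

/-- The differential of a differentiable function of three variables in terms of its partial
derivatives. -/
lemma fderiv_uncurry_three {G : ℝ → ℝ → ℝ → ℝ} {x v p gx gv gp : ℝ}
    (hG : DifferentiableAt ℝ ↿G (x, v, p))
    (hx : HasDerivAt (fun x' => G x' v p) gx x)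
    (hv : HasDerivAt (fun v' => G x v' p) gv v)
    (hp : HasDerivAt (fun p' => G x v p') gp p) (a b c : ℝ) :
    fderiv ℝ ↿G (x, v, p) (a, b, c) = a * gx + b * gv + c * gp := by
  have h1 := hG.hasFDerivAt.comp_hasDerivAt_of_eq x
    ((hasDerivAt_id x).prodMk ((hasDerivAt_const x v).prodMk (hasDerivAt_const x p))) rfl
  have h2 := hG.hasFDerivAt.comp_hasDerivAt_of_eq v
    ((hasDerivAt_const v x).prodMk ((hasDerivAt_id v).prodMk (hasDerivAt_const v p))) rfl
  have h3 := hG.hasFDerivAt.comp_hasDerivAt_of_eq p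
    ((hasDerivAt_const p x).prodMk ((hasDerivAt_const p v).prodMk (hasDerivAt_id p))) rfl
  have e1 := h1.unique hx
  have e2 := h2.unique hv
  have e3 := h3.unique hp
  have key : ((a, b, c) : ℝ × ℝ × ℝ)
      = a • ((1:ℝ), (0:ℝ), (0:ℝ)) + b • ((0:ℝ), (1:ℝ), (0:ℝ)) + c • ((0:ℝ), (0:ℝ), (1:ℝ)) := by
    simp
  rw [key, map_add, map_add, map_smul, map_smul, map_smul, e1, e2, e3]
  simp

/-- Equality of mixed derivatives: `∂ₜ(∂ₓ u) = u_tx` continuous implies `∂ₓ(∂ₜ u) = u_tx`. -/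
lemma hasDerivAt_ut {T : ℝ} {u ut ux utx : ℝ → ℝ → ℝ}
    (hut : ∀ t ∈ Ioo (0:ℝ) T, ∀ x ∈ Icc (0:ℝ) 1, HasDerivAt (fun s => u s x) (ut t x) t)
    (hux : ∀ t ∈ Ioo (0:ℝ) T, ∀ x ∈ Icc (0:ℝ) 1,
      HasDerivWithinAt (fun y => u t y) (ux t x) (Icc (0:ℝ) 1) x)
    (hutx : ∀ t ∈ Ioo (0:ℝ) T, ∀ x ∈ Icc (0:ℝ) 1, HasDerivAt (fun s => ux s x) (utx t x) t)
    (huxcont : ContinuousOn (fun q : ℝ × ℝ => ux q.1 q.2) (Ioo (0:ℝ) T ×ˢ Icc (0:ℝ) 1))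
    (hutxcont : ContinuousOn (fun q : ℝ × ℝ => utx q.1 q.2) (Ioo (0:ℝ) T ×ˢ Icc (0:ℝ) 1))
    {t : ℝ} (ht : t ∈ Ioo (0:ℝ) T) {x : ℝ} (hx : x ∈ Ioo (0:ℝ) 1) :
    HasDerivAt (fun y => ut t y) (utx t x) x := by
  have slice : ∀ f : ℝ → ℝ → ℝ,
      ContinuousOn (fun q : ℝ × ℝ => f q.1 q.2) (Ioo (0:ℝ) T ×ˢ Icc (0:ℝ) 1) →
      ∀ s ∈ Ioo (0:ℝ) T, ContinuousOn (f s) (Icc (0:ℝ) 1) := fun f hf s hs =>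
    hf.comp (f := fun x : ℝ => (s, x)) (by fun_prop) (fun x hx => ⟨hs, hx⟩)
  have h0 : (0:ℝ) ∈ Icc (0:ℝ) 1 := ⟨le_rfl, zero_le_one⟩
  have main : ∀ y ∈ Icc (0:ℝ) 1, ut t y = ut t 0 + ∫ z in (0:ℝ)..y, utx t z := by
    intro y hy
    have hsub : Icc (0:ℝ) y ⊆ Icc 0 1 := Icc_subset_Icc_right hy.2
    have hleib := hasDerivAt_integral_of_continuousOn hy.1 ux utx
      (huxcont.mono (prod_mono subset_rfl hsub)) (hutxcont.mono (prod_mono subset_rfl hsub))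
      (fun s hs z hz => hutx s hs z (hsub hz)) ht
    have hftc : (fun s => u s y - u s 0) =ᶠ[nhds t] fun s => ∫ z in (0:ℝ)..y, ux s z := by
      filter_upwards [isOpen_Ioo.mem_nhds ht] with s hs
      refine (intervalIntegral.integral_eq_sub_of_hasDerivAt_of_le hy.1
        (fun z hz => (hux s hs z (hsub hz)).continuousWithinAt.mono hsub) (fun z hz => ?_)
        (((slice ux huxcont s hs).mono hsub).intervalIntegrable_of_Icc hy.1)).symm
      exact (hux s hs z (hsub (Ioo_subset_Icc_self hz))).hasDerivAt
        (Icc_mem_nhds hz.1 (hz.2.trans_le hy.2))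
    have hdiff := ((hut t ht y hy).sub (hut t ht 0 h0)).unique (hleib.congr_of_eventuallyEq hftc)
    linarith
  have hc := slice utx hutxcont t ht
  have hsub : Icc (0:ℝ) x ⊆ Icc 0 1 := Icc_subset_Icc_right hx.2.le
  have hI := intervalIntegral.integral_hasDerivAt_right
    ((hc.mono hsub).intervalIntegrable_of_Icc hx.1.le)
    ((hc.mono Ioo_subset_Icc_self).stronglyMeasurableAtFilter isOpen_Ioo x hx)
    (hc.continuousAt (Icc_mem_nhds hx.1 hx.2))
  refine (hI.const_add (ut t 0)).congr_of_eventuallyEq ?_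
  filter_upwards [isOpen_Ioo.mem_nhds hx] with y hy
  exact main y (Ioo_subset_Icc_self hy)

/-- Alternative energy decay identity. Let `F : ℝ⁴ → ℝ` be continuous,
`F⁰(x,u,p) := F(x,u,p,0)`, and `L : ℝ³ → ℝ` be `C²` satisfying the Euler identity
`L_u - L_px - p·L_pu - F⁰·L_pp = 0` on `[0,1] × ℝ²`. If `u` is a classical solution of
`u_xx = F(x,u,u_x,u_t)` on `(0,T) × [0,1]` with boundary condition
`L_p(ι,u,u_x)·u_t = 0` at `ι ∈ {0,1}`, then for each `t ∈ (0,T)` the energy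
`E(t) = ∫₀¹ L(x,u,u_x) dx` is differentiable with
`E′(t) = -∫₀¹ L_pp·(F(x,u,u_x,u_t) - F⁰(x,u,u_x))·u_t dx`. -/
theorem energy_decay_identity_alternative_splitting
    (F : ℝ → ℝ → ℝ → ℝ → ℝ)
    (hFc : Continuous ↿F)
    (L Lu Lp Lpx Lpu Lpp : ℝ → ℝ → ℝ → ℝ)
    (hLC2 : ContDiff ℝ 2 ↿L)
    (hLu : ∀ x v p : ℝ, HasDerivAt (fun v' => L x v' p) (Lu x v p) v)
    (hLp : ∀ x v p : ℝ, HasDerivAt (fun p' => L x v p') (Lp x v p) p)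
    (hLpx : ∀ x v p : ℝ, HasDerivAt (fun x' => Lp x' v p) (Lpx x v p) x)
    (hLpu : ∀ x v p : ℝ, HasDerivAt (fun v' => Lp x v' p) (Lpu x v p) v)
    (hLpp : ∀ x v p : ℝ, HasDerivAt (fun p' => Lp x v p') (Lpp x v p) p)
    (hEuler : ∀ x ∈ Icc (0:ℝ) 1, ∀ v p : ℝ,
      Lu x v p - Lpx x v p - p * Lpu x v p - F x v p 0 * Lpp x v p = 0)
    (T : ℝ) (hT : 0 < T)
    (u ut ux uxx utx : ℝ → ℝ → ℝ)
    (hut : ∀ t ∈ Ioo (0:ℝ) T, ∀ x ∈ Icc (0:ℝ) 1,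
      HasDerivAt (fun s => u s x) (ut t x) t)
    (hux : ∀ t ∈ Ioo (0:ℝ) T, ∀ x ∈ Icc (0:ℝ) 1,
      HasDerivWithinAt (fun y => u t y) (ux t x) (Icc (0:ℝ) 1) x)
    (huxx : ∀ t ∈ Ioo (0:ℝ) T, ∀ x ∈ Icc (0:ℝ) 1,
      HasDerivWithinAt (fun y => ux t y) (uxx t x) (Icc (0:ℝ) 1) x)
    (hutx : ∀ t ∈ Ioo (0:ℝ) T, ∀ x ∈ Icc (0:ℝ) 1,
      HasDerivAt (fun s => ux s x) (utx t x) t)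
    (hucont : ContinuousOn (fun q : ℝ × ℝ => u q.1 q.2) (Ioo (0:ℝ) T ×ˢ Icc (0:ℝ) 1))
    (hutcont : ContinuousOn (fun q : ℝ × ℝ => ut q.1 q.2) (Ioo (0:ℝ) T ×ˢ Icc (0:ℝ) 1))
    (huxcont : ContinuousOn (fun q : ℝ × ℝ => ux q.1 q.2) (Ioo (0:ℝ) T ×ˢ Icc (0:ℝ) 1))
    (huxxcont : ContinuousOn (fun q : ℝ × ℝ => uxx q.1 q.2) (Ioo (0:ℝ) T ×ˢ Icc (0:ℝ) 1))
    (hutxcont : ContinuousOn (fun q : ℝ × ℝ => utx q.1 q.2) (Ioo (0:ℝ) T ×ˢ Icc (0:ℝ) 1))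
    (hbdd : ∃ C : ℝ, ∀ t ∈ Ioo (0:ℝ) T, ∀ x ∈ Icc (0:ℝ) 1,
      |u t x| ≤ C ∧ |ut t x| ≤ C ∧ |ux t x| ≤ C ∧ |uxx t x| ≤ C ∧ |utx t x| ≤ C)
    (hPDE : ∀ t ∈ Ioo (0:ℝ) T, ∀ x ∈ Icc (0:ℝ) 1,
      uxx t x = F x (u t x) (ux t x) (ut t x))
    (hBC : ∀ t ∈ Ioo (0:ℝ) T,
      Lp 0 (u t 0) (ux t 0) * ut t 0 = 0 ∧
      Lp 1 (u t 1) (ux t 1) * ut t 1 = 0) :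
    ∀ t ∈ Ioo (0:ℝ) T,
      HasDerivAt (fun s => ∫ x in (0:ℝ)..1, L x (u s x) (ux s x))
        (-(∫ x in (0:ℝ)..1,
            Lpp x (u t x) (ux t x)
              * (F x (u t x) (ux t x) (ut t x) - F x (u t x) (ux t x) 0)
              * ut t x)) t := by
  intro t ht
  have hLdiff : Differentiable ℝ ↿L := hLC2.differentiable (by norm_num)
  have hLx : ∀ x v p : ℝ, HasDerivAt (fun x' => L x' v p)
      (fderiv ℝ ↿L (x, v, p) (1, 0, 0)) x := fun x v p =>
    (hLdiff (x, v, p)).hasFDerivAt.comp_hasDerivAt_of_eq x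
      ((hasDerivAt_id x).prodMk ((hasDerivAt_const x v).prodMk (hasDerivAt_const x p))) rfl
  have hLfd := fun x v p => fderiv_uncurry_three (hLdiff (x, v, p)) (hLx x v p) (hLu x v p)
    (hLp x v p)
  have hfd1 : ContDiff ℝ 1 (fderiv ℝ ↿L) := hLC2.fderiv_right (by norm_num)
  have hLu_c : Continuous ↿Lu := by
    have : ↿Lu = fun q => fderiv ℝ ↿L q (0, 1, 0) := by
      funext ⟨x, v, p⟩
      rw [hLfd]
      simp [Function.HasUncurry.uncurry]
    rw [this]
    exact hfd1.continuous.clm_apply continuous_const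
  have hLp_1 : ContDiff ℝ 1 ↿Lp := by
    have : ↿Lp = fun q => fderiv ℝ ↿L q (0, 0, 1) := by
      funext ⟨x, v, p⟩
      rw [hLfd]
      simp [Function.HasUncurry.uncurry]
    rw [this]
    exact hfd1.clm_apply contDiff_const
  have hLp_c : Continuous ↿Lp := hLp_1.continuous
  have hLpdiff : Differentiable ℝ ↿Lp := hLp_1.differentiable (by norm_num)
  have hLpfd := fun x v p => fderiv_uncurry_three (hLpdiff (x, v, p)) (hLpx x v p) (hLpu x v p)
    (hLpp x v p)
  have hLpfd_c : Continuous (fderiv ℝ ↿Lp) := hLp_1.continuous_fderiv (by norm_num)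
  have hLpp_c : Continuous ↿Lpp := by
    have : ↿Lpp = fun q => fderiv ℝ ↿Lp q (0, 0, 1) := by
      funext ⟨x, v, p⟩
      rw [hLpfd]
      simp [Function.HasUncurry.uncurry]
    rw [this]
    exact hLpfd_c.clm_apply continuous_const
  -- Continuity of the jet `(x, u, u_x)` on the space-time domain.
  have hjet : ContinuousOn (fun q : ℝ × ℝ => (q.2, u q.1 q.2, ux q.1 q.2))
      (Ioo (0:ℝ) T ×ˢ Icc (0:ℝ) 1) :=
    continuousOn_snd.prodMk (hucont.prodMk huxcont)
  have hLeib := hasDerivAt_integral_of_continuousOn zero_le_one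
    (fun s x => L x (u s x) (ux s x))
    (fun s x => Lu x (u s x) (ux s x) * ut s x + Lp x (u s x) (ux s x) * utx s x)
    (hLC2.continuous.comp_continuousOn hjet)
    (((hLu_c.comp_continuousOn hjet).mul hutcont).add
      ((hLp_c.comp_continuousOn hjet).mul hutxcont))
    (fun s hs x hx => by
      have h := (hLdiff (x, u s x, ux s x)).hasFDerivAt.comp_hasDerivAt_of_eq s
        ((hasDerivAt_const s x).prodMk ((hut s hs x hx).prodMk (hutx s hs x hx))) rfl
      rw [hLfd] at h
      exact h.congr_deriv (by ring)) ht
  refine hLeib.congr_deriv ?_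
  have slice : ∀ f : ℝ × ℝ → ℝ, ContinuousOn f (Ioo (0:ℝ) T ×ˢ Icc (0:ℝ) 1) →
      ContinuousOn (fun x => f (t, x)) (Icc (0:ℝ) 1) := fun f hf =>
    hf.comp (f := fun x : ℝ => (t, x)) (by fun_prop) (fun x hx => ⟨ht, hx⟩)
  have hF_c : ContinuousOn (fun q : ℝ × ℝ => F q.2 (u q.1 q.2) (ux q.1 q.2) (ut q.1 q.2))
      (Ioo (0:ℝ) T ×ˢ Icc (0:ℝ) 1) :=
    hFc.comp_continuousOn (continuousOn_snd.prodMk (hucont.prodMk (huxcont.prodMk hutcont)))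
  have hF0_c : ContinuousOn (fun q : ℝ × ℝ => F q.2 (u q.1 q.2) (ux q.1 q.2) 0)
      (Ioo (0:ℝ) T ×ˢ Icc (0:ℝ) 1) :=
    hFc.comp_continuousOn
      (continuousOn_snd.prodMk (hucont.prodMk (huxcont.prodMk continuousOn_const)))
  have hdens := slice _ (((hLu_c.comp_continuousOn hjet).mul hutcont).add
      ((hLp_c.comp_continuousOn hjet).mul hutxcont))
  have hdiss := slice _ (((hLpp_c.comp_continuousOn hjet).mul (hF_c.sub hF0_c)).mul hutcont)
  have hflux := slice _ ((hLp_c.comp_continuousOn hjet).mul hutcont)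
  have hint1 := hdens.intervalIntegrable_of_Icc (μ := MeasureTheory.volume) zero_le_one
  have hint2 := hdiss.intervalIntegrable_of_Icc (μ := MeasureTheory.volume) zero_le_one
  -- Energy density rate plus dissipation is the exact derivative of the flux `L_p u_t`.
  have hFTC := intervalIntegral.integral_eq_sub_of_hasDerivAt_of_le zero_le_one hflux
    (fun x hx => by
      have hxI := Ioo_subset_Icc_self hx
      have hn : Icc (0:ℝ) 1 ∈ nhds x := Icc_mem_nhds hx.1 hx.2
      have h := (hLpdiff (x, u t x, ux t x)).hasFDerivAt.comp_hasDerivAt_of_eq x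
        ((hasDerivAt_id x).prodMk (((hux t ht x hxI).hasDerivAt hn).prodMk
          ((huxx t ht x hxI).hasDerivAt hn))) rfl
      rw [hLpfd] at h
      refine (h.mul (hasDerivAt_ut hut hux hutx huxcont hutxcont ht hx)).congr_deriv ?_
      have hE := hEuler x hxI (u t x) (ux t x)
      have hP := hPDE t ht x hxI
      simp only [Function.comp, Function.HasUncurry.uncurry, id, Pi.mul_apply, Pi.add_apply,
        Pi.sub_apply]
      rw [hP]
      linear_combination (-ut t x) * hE) (hint1.add hint2)
  rw [intervalIntegral.integral_add hint1 hint2] at hFTC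
  obtain ⟨hb0, hb1⟩ := hBC t ht
  have hzero : Lp 1 (u t 1) (ux t 1) * ut t 1 - Lp 0 (u t 0) (ux t 0) * ut t 0 = 0 := by
    rw [hb0, hb1, sub_zero]
  exact eq_neg_of_add_eq_zero_left (hFTC.trans hzero)
end
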